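/- arXiv:1512.07757 — 11 statements merged into one kernel-verified Lean document; each statement's English description precedes it below -/
import Mathlib

section
/- Let G be a d-dimensional simplicial complex on vertex set Fin n with incidence matrix ∂, and let (F,R) be a rooted forest of G. Then the absolute value of det(∂_{R̄,F}) equals the cardinality of the relative homology group H_{d-1}(F,R), i.e. |det(∂_{R̄,F})| = Nat.card of the quotient of ℤ^{G_{d-1}} by the subgroup generated by the standard basis vectors e_r for r ∈ R together with the columns of ∂ indexed by the elements of F. -/
open Finset

/-- `G` is a `d`-dimensional simplicial complex on vertex set `Fin n`. -/
def IsComplex (n d : ℕ) (G : Finset (Finset (Fin n))) : Prop :=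
  (∀ f ∈ G, ∀ g ⊆ f, g ∈ G) ∧ (∀ f ∈ G, f.card ≤ d + 1) ∧ ∃ f ∈ G, f.card = d + 1

/-- The `k`-dimensional faces of `G` (faces of cardinality `k+1`). -/
def faces {n : ℕ} (G : Finset (Finset (Fin n))) (k : ℕ) : Finset (Finset (Fin n)) :=
  G.filter fun f => f.card = k + 1

/-- Incidence entry `∂[r,f]`: equals `(-1)^j` if `r` is obtained from `f` by deleting
its `j`-th smallest element (indexing from 0), and `0` if `r ⊄ f`. -/
def incEntry {n : ℕ} (r f : Finset (Fin n)) : ℤ :=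
  if r ⊆ f then
    (-1 : ℤ) ^ ((f \ r).sum fun v => (f.filter fun w => w < v).card)
  else 0

/-- `F` is a forest of the `d`-dimensional complex `G`: the columns of the incidence
matrix indexed by `F` are linearly independent over `ℚ`. -/
def IsForest (n d : ℕ) (G F : Finset (Finset (Fin n))) : Prop :=
  F ⊆ faces G d ∧
    LinearIndependent ℚ fun f : F => fun r : faces G (d - 1) => (incEntry r.1 f.1 : ℚ)

/-- `R` is a root of `F`: the rows indexed by `R̄ = G_{d-1} \ R` of the submatrix of the
incidence matrix with column set `F` are linearly independent and span the row space of
that submatrix. -/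
def IsRoot (n d : ℕ) (G F R : Finset (Finset (Fin n))) : Prop :=
  R ⊆ faces G (d - 1) ∧
    LinearIndependent ℚ
      (fun r : (faces G (d - 1) \ R : Finset (Finset (Fin n))) =>
        fun f : F => (incEntry r.1 f.1 : ℚ)) ∧
    Submodule.span ℚ
        (Set.range fun r : (faces G (d - 1) \ R : Finset (Finset (Fin n))) =>
          fun f : F => (incEntry r.1 f.1 : ℚ)) =
      Submodule.span ℚ
        (Set.range fun r : (faces G (d - 1) : Finset (Finset (Fin n))) =>
          fun f : F => (incEntry r.1 f.1 : ℚ))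

/-- `(F,R)` is a rooted forest of the `d`-dimensional complex `G`. -/
def IsRootedForest (n d : ℕ) (G F R : Finset (Finset (Fin n))) : Prop :=
  IsForest n d G F ∧ IsRoot n d G F R


/-- The subgroup of `ℤ^{G_{d-1}}` generated by the standard basis vectors `e_r` for
`r ∈ R` together with the columns of the incidence matrix indexed by the elements
of `F`. -/
def relSubgroup (n d : ℕ) (G F R : Finset (Finset (Fin n))) :
    AddSubgroup ((faces G (d - 1) : Finset (Finset (Fin n))) → ℤ) :=
  AddSubgroup.closure
    ({v | ∃ r : (faces G (d - 1) : Finset (Finset (Fin n))), r.1 ∈ R ∧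
        v = Pi.single r 1} ∪
      {v | ∃ f : (faces G d : Finset (Finset (Fin n))), f.1 ∈ F ∧
        v = fun r => incEntry r.1 f.1})

theorem natAbs_det_eq_index_range {ι : Type*} [Fintype ι] [DecidableEq ι]
    (A : Matrix ι ι ℤ) (hA : A.det ≠ 0) :
    A.det.natAbs = (LinearMap.range A.mulVecLin).toAddSubgroup.index := by
  have hinj : Function.Injective A.mulVecLin := by
    intro x y hxy
    exact Matrix.mulVec_injective_of_det_ne_zero hA hxy
  have h := Submodule.natAbs_det_equiv (LinearMap.range A.mulVecLin)
    (LinearEquiv.ofInjective A.mulVecLin hinj)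
  have h2 : (LinearMap.range A.mulVecLin).subtype ∘ₗ
      (((LinearEquiv.ofInjective A.mulVecLin hinj : _ ≃ₗ[ℤ] _) : _ →+ _).toIntLinearMap) =
      Matrix.toLin' A := by
    ext x; rfl
  have h3 : A.det.natAbs = Nat.card ((ι → ℤ) ⧸ LinearMap.range A.mulVecLin) := by
    rw [← h, ← LinearMap.det_toLin' A, ← h2]
  exact h3

/-- If `(F,R)` is a rooted forest of `G`, then
`|det(∂_{R̄,F})| = |H_{d-1}(F,R)|`, the cardinality of the quotient of `ℤ^{G_{d-1}}`
by the subgroup generated by the `e_r`, `r ∈ R`, and the columns of `∂` indexed by `F`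
(the determinant being computed with respect to any identification of `R̄` with `F`). -/
theorem natAbs_det_eq_card_relative_homology
    (n d : ℕ) (hn : 1 ≤ n) (hd : 1 ≤ d)
    (G : Finset (Finset (Fin n))) (hG : IsComplex n d G)
    (F R : Finset (Finset (Fin n))) (hFR : IsRootedForest n d G F R) :
    ∀ e : (faces G (d - 1) \ R : Finset (Finset (Fin n))) ≃ F,
      (Matrix.det (Matrix.of fun r r' => incEntry r.1 (e r').1)).natAbs =
        Nat.card (((faces G (d - 1) : Finset (Finset (Fin n))) → ℤ) ⧸
          relSubgroup n d G F R) := by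
  intro e
  obtain ⟨⟨hF, -⟩, hR, hli, -⟩ := hFR
  set A : Matrix (faces G (d - 1) \ R : Finset (Finset (Fin n)))
    (faces G (d - 1) \ R : Finset (Finset (Fin n))) ℤ :=
    Matrix.of fun r r' => incEntry r.1 (e r').1 with hAdef
  have hA : A.det ≠ 0 := by
    have h1 : LinearIndependent ℚ (A.map (Int.castRingHom ℚ)).row := by
      have h2 := hli.map' (LinearEquiv.funCongrLeft ℚ ℚ e).toLinearMap (LinearEquiv.ker _)
      exact h2
    have h3 := Matrix.linearIndependent_rows_iff_isUnit.1 h1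
    rw [Matrix.isUnit_iff_isUnit_det] at h3
    intro h0
    apply h3.ne_zero
    have := (Int.castRingHom ℚ).map_det A
    rw [h0] at this
    simpa using this.symm
  rw [natAbs_det_eq_index_range A hA]
  let q : (faces G (d - 1) \ R : Finset (Finset (Fin n))) → faces G (d - 1) :=
    fun r => ⟨r.1, (Finset.mem_sdiff.1 r.2).1⟩
  have hq : Function.Injective q := by
    intro a b hab
    exact Subtype.ext (congrArg (fun z => z.1) hab)
  let π : ((faces G (d - 1) : Finset (Finset (Fin n))) → ℤ) →+
      ((faces G (d - 1) \ R : Finset (Finset (Fin n))) → ℤ) :=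
    (LinearMap.funLeft ℤ ℤ q).toAddMonoidHom
  have hπ : Function.Surjective π := LinearMap.funLeft_surjective_of_injective ℤ ℤ q hq
  have key : relSubgroup n d G F R =
      (LinearMap.range A.mulVecLin).toAddSubgroup.comap π := by
    apply le_antisymm
    · unfold relSubgroup
      rw [AddSubgroup.closure_le]
      rintro v (⟨r, hr, rfl⟩ | ⟨f, hf, rfl⟩)
      · refine ⟨0, ?_⟩
        rw [map_zero]
        funext s
        have hne : q s ≠ r := by
          rintro rfl
          exact (Finset.mem_sdiff.1 s.2).2 hr
        change 0 = (Pi.single r 1 : _ → ℤ) (q s)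
        rw [Pi.single_eq_of_ne hne]
      · refine ⟨Pi.single (e.symm ⟨f.1, hf⟩) 1, ?_⟩
        funext s
        simp [hAdef, π, q, LinearMap.funLeft]
    · rintro v ⟨c, hc⟩
      let w : (faces G (d - 1) : Finset (Finset (Fin n))) → ℤ :=
        ∑ j, c j • (fun r : faces G (d - 1) => incEntry r.1 (e j).1)
      have hw : w ∈ relSubgroup n d G F R := by
        refine AddSubgroup.sum_mem _ fun j _ => AddSubgroup.zsmul_mem _ ?_ _
        exact AddSubgroup.subset_closure (Or.inr ⟨⟨(e j).1, hF (e j).2⟩, (e j).2, rfl⟩)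
      have hvw : v - w ∈ relSubgroup n d G F R := by
        have hs : v - w = ∑ r, (v - w) r • (Pi.single r 1 : _ → ℤ) := by
          funext s
          simp [Finset.sum_apply, Pi.single_apply]
        rw [hs]
        refine AddSubgroup.sum_mem _ fun r _ => ?_
        by_cases hr : r.1 ∈ R
        · refine AddSubgroup.zsmul_mem _ ?_ _
          exact AddSubgroup.subset_closure (Or.inl ⟨r, hr, rfl⟩)
        · have h0 : (v - w) r = 0 := by
            have h4 := congrFun hc ⟨r.1, Finset.mem_sdiff.2 ⟨r.2, hr⟩⟩
            have h5 : v r = ∑ j, incEntry r.1 (e j).1 * c j := h4.symm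
            simp [w, h5, Finset.sum_apply, mul_comm]
          rw [h0, zero_smul]
          exact AddSubgroup.zero_mem _
      have := AddSubgroup.add_mem _ hvw hw
      simpa using this
  rw [key]
  exact (AddSubgroup.index_comap_of_surjective _ hπ).symm
end

section
/- Let G be a d-dimensional simplicial complex on vertex set Fin n with incidence matrix ∂ and Laplacian matrix L_G = ∂ · ∂ᵀ. Then, as an identity in the polynomial ring ℤ[x], det(L_G + x·Id) = Σ over all rooted forests (F,R) of G of (Nat.card H_{d-1}(F,R))² · x^{|R|}, where Id is the identity matrix with rows and columns indexed by G_{d-1}. -/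
open Finset

/-- The incidence matrix `∂` of the `d`-dimensional complex `G`, with rows indexed by
`G_{d-1}` and columns indexed by `G_d`. -/
def incMatrix (n d : ℕ) (G : Finset (Finset (Fin n))) :
    Matrix (faces G (d - 1) : Finset (Finset (Fin n)))
      (faces G d : Finset (Finset (Fin n))) ℤ :=
  Matrix.of fun r f => incEntry r.1 f.1

/-- The Laplacian matrix `L_G = ∂ · ∂ᵀ`. -/
def lapMat (n d : ℕ) (G : Finset (Finset (Fin n))) :
    Matrix (faces G (d - 1) : Finset (Finset (Fin n)))
      (faces G (d - 1) : Finset (Finset (Fin n))) ℤ :=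
  incMatrix n d G * (incMatrix n d G).transpose

theorem aux_det_mul {N K R : Type*} [Fintype N] [DecidableEq N] [Fintype K] [DecidableEq K]
    [CommRing R] (A : Matrix N K R) (B : Matrix K N R) :
    (A * B).det = ∑ f : N → K, (∏ i, B (f i) i) * (A.submatrix id f).det := by
  rw [← Matrix.det_transpose]
  have h : (A * B).transpose = fun i => ∑ k, B k i • A.transpose k := by
    funext i j
    simp [Matrix.mul_apply, Finset.sum_apply, mul_comm]
  rw [h]
  change Matrix.detRowAlternating.toMultilinearMap (fun i => ∑ k, B k i • A.transpose k) = _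
  rw [MultilinearMap.map_sum]
  refine Finset.sum_congr rfl fun f _ => ?_
  rw [MultilinearMap.map_smul_univ _ (fun i => B (f i) i) (fun i => A.transpose (f i)), smul_eq_mul]
  congr 1
  rw [← Matrix.det_transpose]
  rfl

theorem aux_cb {N K R : Type*} [Fintype N] [DecidableEq N] [Fintype K] [DecidableEq K]
    [CommRing R] (A : Matrix N K R) (D : K → R) (w : Finset K → R)
    (hw1 : ∀ e : N → K, Function.Injective e →
      w (Finset.univ.image e) = (A.submatrix id e).det ^ 2)
    (hw2 : ∀ S : Finset K, S.card ≠ Fintype.card N → w S = 0) :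
    (A * Matrix.diagonal D * A.transpose).det = ∑ S : Finset K, w S * ∏ k ∈ S, D k := by
  rw [Matrix.mul_assoc, aux_det_mul,
    ← Finset.sum_fiberwise (s := Finset.univ) (g := fun f : N → K => Finset.univ.image f)]
  refine Finset.sum_congr rfl fun S _ => ?_
  by_cases hS : S.card = Fintype.card N
  · let e0 : N ≃ S := Fintype.equivOfCardEq (by simp [hS])
    let e : N → K := fun i => (e0 i).1
    have he : Function.Injective e := Subtype.val_injective.comp e0.injective
    have hSe : Finset.univ.image e = S := by
      ext k
      simp only [Finset.mem_image, Finset.mem_univ, true_and]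
      constructor
      · rintro ⟨i, rfl⟩
        exact (e0 i).2
      · intro hk
        exact ⟨e0.symm ⟨k, hk⟩, by simp [e]⟩
    have key : ∑ f ∈ Finset.univ.filter (fun f : N → K => Finset.univ.image f = S),
        (∏ i, (Matrix.diagonal D * A.transpose) (f i) i) * (A.submatrix id f).det =
        ∑ σ : Equiv.Perm N, (∏ i, (Matrix.diagonal D * A.transpose) (e (σ i)) i) *
          (A.submatrix id (fun i => e (σ i))).det := by
      symm
      refine Finset.sum_bij (fun σ _ => fun i => e (σ i)) ?_ ?_ ?_ ?_
      · intro σ _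
        simp only [Finset.mem_filter, Finset.mem_univ, true_and]
        rw [← hSe]
        ext k
        simp only [Finset.mem_image, Finset.mem_univ, true_and]
        constructor
        · rintro ⟨i, rfl⟩
          exact ⟨_, rfl⟩
        · rintro ⟨i, rfl⟩
          exact ⟨σ.symm i, by simp⟩
      · intro σ _ τ _ h
        ext i
        exact he (congrFun h i)
      · intro f hf
        simp only [Finset.mem_filter, Finset.mem_univ, true_and] at hf
        have hmem : ∀ i, f i ∈ S := fun i => by
          rw [← hf]; exact Finset.mem_image_of_mem _ (Finset.mem_univ _)
        have hfi : Function.Injective f := by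
          have h1 : (Finset.univ.image f).card = (Finset.univ : Finset N).card := by
            rw [hf, hS, Finset.card_univ]
          exact Set.injOn_univ.1 (by simpa using Finset.card_image_iff.1 h1)
        have hbij : Function.Bijective (fun i => e0.symm ⟨f i, hmem i⟩) := by
          rw [← Finite.injective_iff_bijective]
          intro i j hij
          exact hfi (by simpa using hij)
        refine ⟨Equiv.ofBijective _ hbij, Finset.mem_univ _, ?_⟩
        funext i
        simp [e]
      · intro σ _
        rfl
    rw [key, ← hSe, hw1 e he, hSe]
    have hD : ∏ k ∈ S, D k = ∏ i, D (e i) := by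
      rw [← hSe, Finset.prod_image (fun a _ b _ h => he h)]
    rw [hD]
    have h2 : ∀ σ : Equiv.Perm N, (∏ i, (Matrix.diagonal D * A.transpose) (e (σ i)) i) *
          (A.submatrix id (fun i => e (σ i))).det =
        ((∏ i, D (e i)) * (A.submatrix id e).det) *
          (((Equiv.Perm.sign σ : ℤ) : R) * ∏ i, (A.submatrix id e).transpose (σ i) i) := by
      intro σ
      have h3 : A.submatrix id (fun i => e (σ i)) = (A.submatrix id e).submatrix id σ := rfl
      rw [h3, Matrix.det_permute']
      simp only [Matrix.diagonal_mul, Finset.prod_mul_distrib]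
      rw [Equiv.prod_comp σ (fun i => D (e i))]
      simp only [Matrix.transpose_apply, Matrix.submatrix_apply, id]
      ring
    simp_rw [h2]
    rw [← Finset.mul_sum, ← Matrix.det_apply', Matrix.det_transpose]
    ring
  · rw [hw2 S hS, zero_mul]
    refine Finset.sum_eq_zero fun f hf => ?_
    simp only [Finset.mem_filter, Finset.mem_univ, true_and] at hf
    have hni : ¬ Function.Injective f := by
      intro h
      apply hS
      rw [← hf, Finset.card_image_of_injective _ h, Finset.card_univ]
    simp only [Function.Injective, not_forall] at hni
    obtain ⟨i, j, hij, hne⟩ := hni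
    rw [Matrix.det_zero_of_column_eq hne (fun k => by simp [hij]), mul_zero]

theorem aux_card {N : Type*} [Fintype N] [DecidableEq N] (M : Matrix N N ℤ) (h : M.det ≠ 0) :
    Nat.card ((N → ℤ) ⧸ AddSubgroup.closure (Set.range M.transpose)) = M.det.natAbs := by
  have hinj : Function.Injective M.mulVecLin := by
    rw [← LinearMap.ker_eq_bot, LinearMap.ker_eq_bot']
    intro v hv
    by_contra hne
    exact h (Matrix.exists_mulVec_eq_zero_iff.1 ⟨v, hne, hv⟩)
  have hr : AddSubgroup.closure (Set.range M.transpose) =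
      (LinearMap.range M.mulVecLin).toAddSubgroup := by
    rw [Matrix.range_mulVecLin, ← Submodule.span_int_eq_addSubgroupClosure]
    rfl
  rw [hr]
  have := Submodule.natAbs_det_equiv (LinearMap.range M.mulVecLin)
    (LinearEquiv.ofInjective M.mulVecLin hinj)
  refine Eq.trans this.symm ?_
  congr 1
  rw [← LinearMap.det_toLin']
  congr 1

theorem aux_root (n d : ℕ) (G F R : Finset (Finset (Fin n))) (hF : F ⊆ faces G d)
    (hR : R ⊆ faces G (d - 1)) :
    IsRootedForest n d G F R ↔ (faces G (d - 1) \ R).card = F.card ∧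
      ∀ a : Finset (Fin n) → ℚ, (∀ f, f ∉ F → a f = 0) →
        (∀ r ∈ faces G (d - 1) \ R, ∑ f ∈ F, a f * (incEntry r f : ℚ) = 0) → a = 0 := by
  unfold IsRootedForest IsForest IsRoot
  let MF : Matrix (faces G (d - 1)) F ℚ := Matrix.of fun r f => (incEntry r.1 f.1 : ℚ)
  let B : Matrix (faces G (d - 1) \ R : Finset (Finset (Fin n))) F ℚ :=
    Matrix.of fun r f => (incEntry r.1 f.1 : ℚ)
  constructor
  · rintro ⟨⟨-, hcol⟩, -, hrow, hspan⟩
    constructor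
    · have h1 := finrank_span_eq_card hrow
      rw [hspan] at h1
      have h2 : MF.rank = Module.finrank ℚ (Submodule.span ℚ (Set.range MF.row)) :=
        Matrix.rank_eq_finrank_span_row _
      have h3 : MF.transpose.rank = Fintype.card F :=
        LinearIndependent.rank_matrix (M := MF.transpose) hcol
      rw [Matrix.rank_transpose] at h3
      have h4 : Module.finrank ℚ (Submodule.span ℚ (Set.range MF.row)) = _ := h1
      rw [h4] at h2
      rw [h2] at h3
      rwa [Fintype.card_coe, Fintype.card_coe] at h3
    · intro a ha hB
      have h0 : ∀ v ∈ Submodule.span ℚ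
        (Set.range fun r : (faces G (d - 1) \ R : Finset (Finset (Fin n))) =>
          fun f : F => (incEntry r.1 f.1 : ℚ)), ∑ f : F, a f.1 * v f = 0 := by
        intro v hv
        induction hv using Submodule.span_induction with
        | mem x hx =>
          obtain ⟨r, rfl⟩ := hx
          have := hB r.1 r.2
          rw [← Finset.sum_coe_sort] at this
          exact this
        | zero => simp
        | add x y _ _ hx hy =>
          simp only [Pi.add_apply, mul_add]
          rw [Finset.sum_add_distrib, hx, hy, add_zero]
        | smul c x _ hx =>
          have : ∑ f : F, a f.1 * (c • x) f = c * ∑ f : F, a f.1 * x f := by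
            rw [Finset.mul_sum]
            refine Finset.sum_congr rfl fun f _ => ?_
            simp only [Pi.smul_apply, smul_eq_mul]
            ring
          rw [this, hx, mul_zero]
      rw [hspan] at h0
      rw [Fintype.linearIndependent_iff] at hcol
      have h5 := hcol (fun f => a f.1) (by
        funext r
        have := h0 _ (Submodule.subset_span ⟨r, rfl⟩)
        simpa [Finset.sum_apply] using this)
      funext f
      by_cases hf : f ∈ F
      · exact h5 ⟨f, hf⟩
      · exact ha f hf
  · rintro ⟨hcard, hker⟩
    have hinj : ∀ g : F → ℚ, (∀ r ∈ faces G (d - 1) \ R,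
        ∑ f : F, g f * (incEntry r f.1 : ℚ) = 0) → ∀ f, g f = 0 := by
      intro g hg f
      have := hker (fun f => if h : f ∈ F then g ⟨f, h⟩ else 0)
        (fun f hf => by simp [hf]) (by
          intro r hr
          rw [← Finset.sum_coe_sort]
          simpa using hg r hr)
      simpa using congrFun this f.1
    have hBcol : LinearIndependent ℚ B.transpose.row := by
      rw [Fintype.linearIndependent_iff]
      intro g hg
      apply hinj
      intro r hr
      have := congrFun hg ⟨r, hr⟩
      simpa [Finset.sum_apply, B, Matrix.row] using this
    have hrk : B.rank = Fintype.card F := by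
      rw [← Matrix.rank_transpose]
      exact LinearIndependent.rank_matrix hBcol
    have hrk2 : Module.finrank ℚ (Submodule.span ℚ (Set.range B.row)) = Fintype.card F := by
      rw [← Matrix.rank_eq_finrank_span_row, hrk]
    have htop : Submodule.span ℚ (Set.range B.row) = ⊤ := by
      apply Submodule.eq_top_of_finrank_eq
      rw [hrk2]
      simp
    refine ⟨⟨hF, ?_⟩, hR, ?_, ?_⟩
    · rw [Fintype.linearIndependent_iff]
      intro g hg
      apply hinj
      intro r hr
      have := congrFun hg ⟨r, (Finset.mem_sdiff.1 hr).1⟩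
      simpa [Finset.sum_apply] using this
    · change LinearIndependent ℚ B.row
      rw [linearIndependent_iff_card_eq_finrank_span, Set.finrank, hrk2]
      rwa [Fintype.card_coe, Fintype.card_coe]
    · apply le_antisymm
      · apply Submodule.span_mono
        rintro _ ⟨r, rfl⟩
        exact ⟨⟨r.1, (Finset.mem_sdiff.1 r.2).1⟩, rfl⟩
      · change _ ≤ Submodule.span ℚ (Set.range B.row)
        rw [htop]
        exact le_top

/-- The matrix `[∂ | I]`. -/
def augMat (n d : ℕ) (G : Finset (Finset (Fin n))) :
    Matrix (faces G (d - 1)) ((faces G d) ⊕ (faces G (d - 1))) ℤ :=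
  Matrix.fromCols (incMatrix n d G) 1

/-- The forest part of `S`. -/
def lpart {n d : ℕ} {G : Finset (Finset (Fin n))}
    (S : Finset ((faces G d) ⊕ (faces G (d - 1)))) : Finset (Finset (Fin n)) :=
  S.toLeft.map (Function.Embedding.subtype _)

/-- The root part of `S`. -/
def rpart {n d : ℕ} {G : Finset (Finset (Fin n))}
    (S : Finset ((faces G d) ⊕ (faces G (d - 1)))) : Finset (Finset (Fin n)) :=
  S.toRight.map (Function.Embedding.subtype _)

section
variable {n d : ℕ} {G : Finset (Finset (Fin n))} (S : Finset ((faces G d) ⊕ (faces G (d - 1))))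

theorem mem_lpart (f : faces G d) : f.1 ∈ lpart S ↔ Sum.inl f ∈ S := by
  simp [lpart]

theorem mem_rpart (f : faces G (d - 1)) : f.1 ∈ rpart S ↔ Sum.inr f ∈ S := by
  simp [rpart]

theorem lpart_sub : lpart S ⊆ faces G d := by
  intro f hf
  simp only [lpart, Finset.mem_map] at hf
  obtain ⟨g, _, rfl⟩ := hf
  exact g.2

theorem rpart_sub : rpart S ⊆ faces G (d - 1) := by
  intro f hf
  simp only [rpart, Finset.mem_map] at hf
  obtain ⟨g, _, rfl⟩ := hf
  exact g.2

theorem card_parts : (lpart S).card + (rpart S).card = S.card := by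
  simp [lpart, rpart, Finset.card_toLeft_add_card_toRight]

theorem card_parts_iff : (faces G (d - 1) \ rpart S).card = (lpart S).card ↔
    S.card = Fintype.card (faces G (d - 1)) := by
  rw [Finset.card_sdiff_of_subset (rpart_sub S), ← card_parts, Fintype.card_coe]
  have := Finset.card_le_card (rpart_sub S)
  omega

theorem aux_sum (r : Finset (Fin n)) (a : Finset (Fin n) → ℚ) (ha : ∀ f, f ∉ lpart S → a f = 0) :
    ∑ f ∈ lpart S, a f * (incEntry r f : ℚ) = ∑ f : faces G d, a f.1 * (incEntry r f.1 : ℚ) := by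
  rw [Finset.sum_coe_sort (faces G d) (fun f => a f * (incEntry r f : ℚ))]
  refine Finset.sum_subset (lpart_sub S) fun f _ hf => ?_
  rw [ha f hf, zero_mul]

theorem aug_sum (r : faces G (d - 1)) (c : (faces G d) ⊕ (faces G (d - 1)) → ℚ) :
    ∑ k, (augMat n d G r k : ℚ) * c k =
      (∑ f : faces G d, c (Sum.inl f) * (incEntry r.1 f.1 : ℚ)) + c (Sum.inr r) := by
  rw [Fintype.sum_sum_type]
  congr 1
  · refine Finset.sum_congr rfl fun f _ => ?_
    simp [augMat, incMatrix, mul_comm]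
  · simp [augMat, Matrix.one_apply]

theorem aux_rooted (e : faces G (d - 1) → (faces G d) ⊕ (faces G (d - 1)))
    (he : Function.Injective e) (hS : Finset.univ.image e = S) :
    IsRootedForest n d G (lpart S) (rpart S) ↔ ((augMat n d G).submatrix id e).det ≠ 0 := by
  have hcard : S.card = Fintype.card (faces G (d - 1)) := by
    rw [← hS, Finset.card_image_of_injective _ he, Finset.card_univ]
  have hsum : ∀ c : (faces G d) ⊕ (faces G (d - 1)) → ℚ, (∀ k, k ∉ S → c k = 0) → ∀ r,
      ∑ k, (augMat n d G r k : ℚ) * c k = ∑ i, (augMat n d G r (e i) : ℚ) * c (e i) := by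
    intro c hc r
    rw [← Finset.sum_image (s := Finset.univ) (g := e)
      (f := fun k => (augMat n d G r k : ℚ) * c k) (fun a _ b _ h => he h), hS]
    symm
    refine Finset.sum_subset (Finset.subset_univ _) fun k _ hk => ?_
    rw [hc k hk, mul_zero]
  have hdet : ((augMat n d G).submatrix id e).det ≠ 0 ↔ ∀ v : faces G (d - 1) → ℚ,
      (∀ r, ∑ i, (augMat n d G r (e i) : ℚ) * v i = 0) → v = 0 := by
    have h1 : (((augMat n d G).submatrix id e).map (Int.castRingHom ℚ)).det =
        (((augMat n d G).submatrix id e).det : ℚ) :=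
      (RingHom.map_det (Int.castRingHom ℚ) ((augMat n d G).submatrix id e)).symm
    rw [← Int.cast_ne_zero (α := ℚ), ← h1, Ne, ← Matrix.exists_mulVec_eq_zero_iff]
    push Not
    constructor
    · intro h v hv
      by_contra hne
      apply h v hne
      funext r
      simpa [Matrix.mulVec, dotProduct] using hv r
    · intro h v hne hv
      apply hne
      apply h
      intro r
      simpa [Matrix.mulVec, dotProduct] using congrFun hv r
  rw [aux_root n d G _ _ (lpart_sub S) (rpart_sub S), card_parts_iff, hdet]
  constructor
  · rintro ⟨-, hker⟩ v hv
    let c : (faces G d) ⊕ (faces G (d - 1)) → ℚ := Function.extend e v 0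
    have hce : ∀ i, c (e i) = v i := fun i => he.extend_apply v 0 i
    have hc : ∀ k, k ∉ S → c k = 0 := by
      intro k hk
      apply Function.extend_apply'
      rintro ⟨i, rfl⟩
      apply hk
      rw [← hS]
      exact Finset.mem_image_of_mem _ (Finset.mem_univ _)
    have hAc : ∀ r, ∑ k, (augMat n d G r k : ℚ) * c k = 0 := by
      intro r
      rw [hsum c hc]
      simpa [hce] using hv r
    simp only [aug_sum] at hAc
    have ha0 : ∀ f, f ∉ lpart S →
        (fun f => if h : f ∈ faces G d then c (Sum.inl ⟨f, h⟩) else 0) f = 0 := by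
      intro f hf
      by_cases h : f ∈ faces G d
      · simp only [h, dif_pos]
        apply hc
        rwa [← mem_lpart]
      · simp [h]
    have ha := hker (fun f => if h : f ∈ faces G d then c (Sum.inl ⟨f, h⟩) else 0) ha0 (by
      intro r hr
      rw [aux_sum S r _ ha0]
      obtain ⟨hr1, hr2⟩ := Finset.mem_sdiff.1 hr
      have h1 := hAc ⟨r, hr1⟩
      rw [hc (Sum.inr ⟨r, hr1⟩) (by rwa [← mem_rpart]), add_zero] at h1
      simpa using h1)
    have hl : ∀ f, c (Sum.inl f) = 0 := by
      intro f
      simpa using congrFun ha f.1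
    have hr : ∀ r, c (Sum.inr r) = 0 := by
      intro r
      simpa [hl] using hAc r
    funext i
    rw [← hce]
    rcases e i with f | r
    · exact hl f
    · exact hr r
  · intro h
    refine ⟨hcard, ?_⟩
    intro a ha hB
    let c : (faces G d) ⊕ (faces G (d - 1)) → ℚ := Sum.elim (fun f => a f.1)
      (fun r => - ∑ f : faces G d, a f.1 * (incEntry r.1 f.1 : ℚ))
    have hc : ∀ k, k ∉ S → c k = 0 := by
      rintro (f | r) hk
      · exact ha _ (by rwa [mem_lpart])
      · have := hB r.1 (Finset.mem_sdiff.2 ⟨r.2, by rwa [mem_rpart]⟩)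
        rw [aux_sum S _ _ ha] at this
        simp only [c, Sum.elim_inr, this, neg_zero]
    have hv := h (fun i => c (e i)) (by
      intro r
      rw [← hsum c hc, aug_sum]
      simp [c])
    funext f
    by_cases hf : f ∈ lpart S
    · have h1 : Sum.inl ⟨f, lpart_sub S hf⟩ ∈ S := (mem_lpart S ⟨f, lpart_sub S hf⟩).1 hf
      obtain ⟨i, _, hi⟩ := Finset.mem_image.1 (hS.symm.subset h1)
      have h2 := congrFun hv i
      simp only [hi] at h2
      exact h2
    · exact ha f hf

theorem aux_closure (e : faces G (d - 1) → (faces G d) ⊕ (faces G (d - 1)))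
    (hS : Finset.univ.image e = S) :
    relSubgroup n d G (lpart S) (rpart S) =
      AddSubgroup.closure (Set.range ((augMat n d G).submatrix id e).transpose) := by
  have hmem : ∀ k, k ∈ S ↔ ∃ i, e i = k := by
    intro k
    rw [← hS]
    simp
  unfold relSubgroup
  congr 1
  ext v
  simp only [Set.mem_union, Set.mem_ofPred_eq, mem_lpart, mem_rpart, Set.mem_range, hmem]
  have hl : ∀ i f, e i = Sum.inl f → ((augMat n d G).submatrix id e).transpose i =
      fun r => incEntry r.1 f.1 := by
    intro i f h
    funext r
    simp [h, augMat, incMatrix]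
  have hr : ∀ i f, e i = Sum.inr f → ((augMat n d G).submatrix id e).transpose i =
      Pi.single f 1 := by
    intro i f h
    funext r
    simp [h, augMat, Matrix.one_apply, Pi.single_apply]
  constructor
  · rintro (⟨r, ⟨i, hi⟩, rfl⟩ | ⟨f, ⟨i, hi⟩, rfl⟩)
    · exact ⟨i, hr i r hi⟩
    · exact ⟨i, hl i f hi⟩
  · rintro ⟨i, rfl⟩
    rcases h : e i with f | r
    · exact Or.inr ⟨f, ⟨i, h⟩, hl i f h⟩
    · exact Or.inl ⟨r, ⟨i, h⟩, hr i r h⟩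

end

open scoped Classical in
/-- As an identity in `ℤ[x]`,
`det(L_G + x·Id) = Σ_{(F,R) rooted forest of G} |H_{d-1}(F,R)|² · x^{|R|}`. -/
theorem det_lap_add_X_eq_sum_rootedForests
    (n d : ℕ) (hn : 1 ≤ n) (hd : 1 ≤ d)
    (G : Finset (Finset (Fin n))) (hG : IsComplex n d G) :
    Matrix.det ((lapMat n d G).map Polynomial.C +
        (Polynomial.X : Polynomial ℤ) • (1 : Matrix _ _ (Polynomial ℤ))) =
      ∑ F ∈ (faces G d).powerset, ∑ R ∈ (faces G (d - 1)).powerset,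
        if IsRootedForest n d G F R then
          (Nat.card (((faces G (d - 1) : Finset (Finset (Fin n))) → ℤ) ⧸
              relSubgroup n d G F R) : Polynomial ℤ) ^ 2 * Polynomial.X ^ R.card
        else 0 := by
  let A : Matrix (faces G (d - 1)) ((faces G d) ⊕ (faces G (d - 1))) (Polynomial ℤ) :=
    (augMat n d G).map Polynomial.C
  let D : (faces G d) ⊕ (faces G (d - 1)) → Polynomial ℤ :=
    Sum.elim (fun _ => 1) (fun _ => Polynomial.X)
  have hL : (lapMat n d G).map Polynomial.C +
        (Polynomial.X : Polynomial ℤ) • (1 : Matrix _ _ (Polynomial ℤ)) =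
      A * Matrix.diagonal D * A.transpose := by
    ext1 i j
    rw [Matrix.mul_apply, Fintype.sum_sum_type]
    simp only [Matrix.mul_diagonal]
    simp only [Matrix.add_apply, Matrix.map_apply, lapMat, Matrix.mul_apply,
      Matrix.transpose_apply, A, D, augMat, Matrix.fromCols_apply_inl, Matrix.fromCols_apply_inr,
      Sum.elim_inl, Sum.elim_inr, map_sum, map_mul, mul_one, Matrix.smul_apply, smul_eq_mul]
    refine congrArg₂ _ rfl ?_
    rw [Finset.sum_eq_single j]
    · by_cases h : i = j <;> simp [Matrix.one_apply, h]
    · intro b _ hb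
      simp [Matrix.one_apply, hb.symm]
    · simp
  let w : Finset ((faces G d) ⊕ (faces G (d - 1))) → Polynomial ℤ := fun S =>
    if IsRootedForest n d G (lpart S) (rpart S) then
      (Nat.card (((faces G (d - 1) : Finset (Finset (Fin n))) → ℤ) ⧸
              relSubgroup n d G (lpart S) (rpart S)) : Polynomial ℤ) ^ 2 else 0
  rw [hL, aux_cb A D w]
  · rw [← Finset.sum_product']
    refine Finset.sum_bij (fun S _ => (lpart S, rpart S)) ?_ ?_ ?_ ?_
    · intro S _
      simp [lpart_sub, rpart_sub]
    · intro S _ T _ h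
      obtain ⟨h1, h2⟩ := Prod.mk.inj h
      ext k
      rcases k with f | r
      · rw [← mem_lpart, ← mem_lpart, h1]
      · rw [← mem_rpart, ← mem_rpart, h2]
    · rintro ⟨F, R⟩ h
      simp only [Finset.mem_product, Finset.mem_powerset] at h
      refine ⟨Finset.univ.filter (fun k => Sum.elim (fun f => f.1 ∈ F) (fun r => r.1 ∈ R) k),
        Finset.mem_univ _, ?_⟩
      refine Prod.ext ?_ ?_
      · ext f
        by_cases hf : f ∈ faces G d
        · rw [mem_lpart _ ⟨f, hf⟩]
          simp
        · exact ⟨fun hx => absurd (lpart_sub _ hx) hf, fun hx => absurd (h.1 hx) hf⟩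
      · ext f
        by_cases hf : f ∈ faces G (d - 1)
        · rw [mem_rpart _ ⟨f, hf⟩]
          simp
        · exact ⟨fun hx => absurd (rpart_sub _ hx) hf, fun hx => absurd (h.2 hx) hf⟩
    · intro S _
      have hprod : ∏ k ∈ S, D k = Polynomial.X ^ (rpart S).card := by
        have h1 : (rpart S).card = S.toRight.card := by simp [rpart]
        rw [h1, ← Finset.toLeft_disjSum_toRight (u := S), Finset.prod_disjSum]
        simp [D]
      rw [hprod]
      simp only [w, ite_mul, zero_mul]
  · intro e he
    have hdetA : (A.submatrix id e).det =
        Polynomial.C (((augMat n d G).submatrix id e).det) :=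
      (RingHom.map_det Polynomial.C ((augMat n d G).submatrix id e)).symm
    rw [hdetA]
    simp only [w]
    have hS : Finset.univ.image e = Finset.univ.image e := rfl
    by_cases h : ((augMat n d G).submatrix id e).det = 0
    · rw [if_neg (by rw [aux_rooted _ e he (by convert hS)]; simpa using h), h]
      simp
    · rw [if_pos ((aux_rooted _ e he (by convert hS)).2 h), aux_closure _ e (by convert hS),
        aux_card _ h]
      rw [← Polynomial.C_pow, ← Int.natAbs_sq, Polynomial.C_pow]
      rfl
  · intro S hS
    simp only [w]
    rw [if_neg]
    intro h
    rw [aux_root n d G _ _ (lpart_sub S) (rpart_sub S), card_parts_iff] at h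
    exact hS h.1
end

section
/- Let G be a d-dimensional simplicial complex on vertex set Fin n with incidence matrix ∂ and Laplacian matrix L_G = ∂ · ∂ᵀ, and let R ⊆ G_{d-1} be a root of G, i.e. the rows of ∂ indexed by R̄ = G_{d-1} \ R form a basis of the row space of ∂. Then Σ over all spanning forests F of G of det(∂_{R̄,F})² = det(L_G^R), where a spanning forest of G is a subset F ⊆ G_d such that the columns of ∂ indexed by F form a basis of the column space of ∂, and L_G^R is the submatrix of L_G obtained by deleting the rows and columns indexed by the elements of R. -/
open Finset

/-- `F` is a spanning forest of `G`: the columns of the incidence matrix indexed by `F`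
form a basis of the column space of the incidence matrix. -/
def IsSpanningForest (n d : ℕ) (G F : Finset (Finset (Fin n))) : Prop :=
  F ⊆ faces G d ∧
    LinearIndependent ℚ
      (fun f : F => fun r : faces G (d - 1) => (incEntry r.1 f.1 : ℚ)) ∧
    Submodule.span ℚ
        (Set.range fun f : F =>
          fun r : (faces G (d - 1) : Finset (Finset (Fin n))) => (incEntry r.1 f.1 : ℚ)) =
      Submodule.span ℚ
        (Set.range fun f : (faces G d : Finset (Finset (Fin n))) =>
          fun r : (faces G (d - 1) : Finset (Finset (Fin n))) => (incEntry r.1 f.1 : ℚ))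

/-- `R` is a root of `G`: the rows of the incidence matrix indexed by `R̄ = G_{d-1} \ R`
form a basis of the row space of the incidence matrix. -/
def IsRootOfComplex (n d : ℕ) (G R : Finset (Finset (Fin n))) : Prop :=
  R ⊆ faces G (d - 1) ∧
    LinearIndependent ℚ
      (fun r : (faces G (d - 1) \ R : Finset (Finset (Fin n))) =>
        fun f : (faces G d : Finset (Finset (Fin n))) => (incEntry r.1 f.1 : ℚ)) ∧
    Submodule.span ℚ
        (Set.range fun r : (faces G (d - 1) \ R : Finset (Finset (Fin n))) =>
          fun f : (faces G d : Finset (Finset (Fin n))) => (incEntry r.1 f.1 : ℚ)) =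
      Submodule.span ℚ
        (Set.range fun r : (faces G (d - 1) : Finset (Finset (Fin n))) =>
          fun f : (faces G d : Finset (Finset (Fin n))) => (incEntry r.1 f.1 : ℚ))

/-- The square submatrix `∂_{R̄,F}` of the incidence matrix, with rows indexed by
`R̄ = G_{d-1} \ R` and columns indexed by `F` (identified with `R̄` via `e`). -/
def subMat (n d : ℕ) (G F R : Finset (Finset (Fin n)))
    (e : (faces G (d - 1) \ R : Finset (Finset (Fin n))) ≃ F) :
    Matrix (faces G (d - 1) \ R : Finset (Finset (Fin n)))
      (faces G (d - 1) \ R : Finset (Finset (Fin n))) ℤ :=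
  Matrix.of fun r r' => incEntry r.1 (e r').1

/-- Cauchy–Binet, in a form where the summand is any function agreeing with the minors. -/
theorem cauchy_binet_aux {m α : Type*} [Fintype m] [DecidableEq m] [DecidableEq α]
    (T : Finset α) (A : m → α → ℤ) (B : α → m → ℤ) (g : Finset α → ℤ)
    (h1 : ∀ F ⊆ T, ∀ e : m ≃ F, g F =
      Matrix.det (Matrix.of fun i j => A i (e j).1) * Matrix.det (Matrix.of fun i j => B (e i).1 j))
    (h2 : ∀ F ⊆ T, IsEmpty (m ≃ F) → g F = 0) :
    ∑ F ∈ T.powerset, g F = Matrix.det (Matrix.of fun i j => ∑ f ∈ T, A i f * B f j) := by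
  have key : Matrix.det (Matrix.of fun i j => ∑ f ∈ T, A i f * B f j) =
      ∑ p ∈ Fintype.piFinset (fun _ : m => T),
        Matrix.det (Matrix.of fun i j => A i (p j)) * ∏ i, B (p i) i := by
    simp only [Matrix.det_apply', Matrix.of_apply, Finset.prod_univ_sum, Finset.mul_sum,
      Finset.sum_mul]
    rw [Finset.sum_comm]
    refine Finset.sum_congr rfl fun p _ => Finset.sum_congr rfl fun σ _ => ?_
    rw [Finset.prod_mul_distrib, mul_assoc]
  rw [key, ← Finset.sum_fiberwise_of_maps_to
    (s := Fintype.piFinset (fun _ : m => T)) (t := T.powerset)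
    (g := fun p => Finset.univ.image p)]
  swap
  · intro p hp
    rw [Fintype.mem_piFinset] at hp
    rw [Finset.mem_powerset]
    intro x hx
    obtain ⟨i, _, rfl⟩ := Finset.mem_image.mp hx
    exact hp i
  refine Finset.sum_congr rfl fun F hF => ?_
  rw [Finset.mem_powerset] at hF
  rcases isEmpty_or_nonempty (m ≃ F) with hE | ⟨⟨e⟩⟩
  · rw [h2 F hF hE]
    symm
    refine Finset.sum_eq_zero fun p hp => ?_
    have himg := (Finset.mem_filter.mp hp).2
    have hni : ¬ Function.Injective p := by
      intro hinj
      refine hE.false (Equiv.ofBijective (fun i => (⟨p i, ?_⟩ : F)) ⟨?_, ?_⟩)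
      · rw [← himg]; exact Finset.mem_image_of_mem _ (Finset.mem_univ _)
      · intro i j hij
        exact hinj (congrArg Subtype.val hij)
      · rintro ⟨x, hx⟩
        rw [← himg] at hx
        obtain ⟨i, _, hi⟩ := Finset.mem_image.mp hx
        exact ⟨i, Subtype.ext hi⟩
    simp only [Function.Injective, not_forall] at hni
    obtain ⟨i, j, hij, hne⟩ := hni
    rw [Matrix.det_zero_of_column_eq hne (by intro k; simp [hij]), zero_mul]
  · rw [h1 F hF e, Matrix.det_apply' (Matrix.of fun i j => B (e i).1 j), Finset.mul_sum]
    refine Finset.sum_bij (fun τ _ => fun i => (e (τ i)).1) ?_ ?_ ?_ ?_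
    · intro τ _
      rw [Finset.mem_filter, Fintype.mem_piFinset]
      refine ⟨fun i => hF (e (τ i)).2, ?_⟩
      ext x
      simp only [Finset.mem_image, Finset.mem_univ, true_and]
      constructor
      · rintro ⟨i, rfl⟩; exact (e (τ i)).2
      · intro hx
        exact ⟨τ.symm (e.symm ⟨x, hx⟩), by simp⟩
    · intro τ _ τ' _ h
      ext i
      exact e.injective (Subtype.ext (congrFun h i))
    · intro p hp
      have himg := (Finset.mem_filter.mp hp).2
      have hmem : ∀ i, p i ∈ F := fun i => by
        rw [← himg]; exact Finset.mem_image_of_mem _ (Finset.mem_univ _)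
      have hsurj : Function.Surjective (fun i => e.symm ⟨p i, hmem i⟩) := by
        intro j
        have hx : (e j).1 ∈ Finset.univ.image p := himg.symm ▸ (e j).2
        obtain ⟨i, _, hi⟩ := Finset.mem_image.mp hx
        exact ⟨i, by simp [hi]⟩
      refine ⟨Equiv.ofBijective _ (Finite.surjective_iff_bijective.mp hsurj), Finset.mem_univ _, ?_⟩
      funext i
      simp
    · intro τ _
      have hd : Matrix.det (Matrix.of fun i j => A i (e (τ j)).1) =
          (Equiv.Perm.sign τ : ℤ) * Matrix.det (Matrix.of fun i j => A i (e j).1) := by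
        have := Matrix.det_permute' τ (Matrix.of fun i j => A i (e j).1)
        simpa [Matrix.submatrix] using this
      rw [hd]
      simp only [Matrix.of_apply, Int.cast_id]
      ring

/-- A column set with nonsingular square minor on a row basis is a column basis. -/
theorem spanning_of_det_ne_zero (n d : ℕ) (G F R : Finset (Finset (Fin n)))
    (hR : IsRootOfComplex n d G R) (hF : F ⊆ faces G d)
    (e : (faces G (d - 1) \ R : Finset (Finset (Fin n))) ≃ F)
    (hdet : Matrix.det (subMat n d G F R e) ≠ 0) : IsSpanningForest n d G F := by
  have hli : LinearIndependent ℚ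
      (fun f : F => fun r : faces G (d - 1) => (incEntry r.1 f.1 : ℚ)) := by
    have hdQ : ((subMat n d G F R e).map (Int.cast : ℤ → ℚ)).det ≠ 0 := by
      have := (Int.cast_det (R := ℚ) (subMat n d G F R e))
      rw [← this]
      exact_mod_cast hdet
    have hcol := Matrix.linearIndependent_cols_of_det_ne_zero hdQ
    rw [← linearIndependent_equiv e]
    let π : ((faces G (d - 1)) → ℚ) →ₗ[ℚ]
        ((faces G (d - 1) \ R : Finset (Finset (Fin n))) → ℚ) :=
      LinearMap.funLeft ℚ ℚ (fun r => ⟨r.1, (Finset.mem_sdiff.mp r.2).1⟩)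
    refine LinearIndependent.of_comp π ?_
    exact hcol
  refine ⟨hF, hli, ?_⟩
  apply Submodule.eq_of_le_of_finrank_eq
  · apply Submodule.span_mono
    rintro _ ⟨f, rfl⟩
    exact ⟨⟨f.1, hF f.2⟩, rfl⟩
  · obtain ⟨-, hRli, hRspan⟩ := hR
    let M : Matrix (faces G (d - 1)) (faces G d) ℚ := Matrix.of fun r f => (incEntry r.1 f.1 : ℚ)
    have a1 : M.rank = Module.finrank ℚ (Submodule.span ℚ
        (Set.range fun f : (faces G d : Finset (Finset (Fin n))) =>
          fun r : (faces G (d - 1) : Finset (Finset (Fin n))) => (incEntry r.1 f.1 : ℚ))) :=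
      M.rank_eq_finrank_span_cols
    have a2 : M.rank = Module.finrank ℚ (Submodule.span ℚ
        (Set.range fun r : (faces G (d - 1) : Finset (Finset (Fin n))) =>
          fun f : (faces G d : Finset (Finset (Fin n))) => (incEntry r.1 f.1 : ℚ))) :=
      M.rank_eq_finrank_span_row
    rw [← a1, a2, ← hRspan, finrank_span_eq_card hli, finrank_span_eq_card hRli]
    exact (Fintype.card_congr e).symm

open scoped Classical in
/-- simplicial matrix-tree theorem. If `R` is a root of `G`, then
`Σ_{F spanning forest of G} det(∂_{R̄,F})² = det(L_G^R)`, where `L_G^R` is obtained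
from `L_G` by deleting the rows and columns indexed by the faces in `R`. -/
theorem simplicial_matrix_tree_theorem
    (n d : ℕ) (hn : 1 ≤ n) (hd : 1 ≤ d)
    (G : Finset (Finset (Fin n))) (hG : IsComplex n d G)
    (R : Finset (Finset (Fin n))) (hR : IsRootOfComplex n d G R)
    (e : ∀ F : Finset (Finset (Fin n)), IsSpanningForest n d G F →
      ((faces G (d - 1) \ R : Finset (Finset (Fin n))) ≃ F)) :
    (∑ F ∈ (faces G d).powerset,
        if h : IsSpanningForest n d G F then
          Matrix.det (subMat n d G F R (e F h)) ^ 2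
        else 0) =
      Matrix.det ((lapMat n d G).submatrix
        (fun r : (faces G (d - 1) \ R : Finset (Finset (Fin n))) =>
          (⟨r.1, (Finset.mem_sdiff.mp r.2).1⟩ :
            (faces G (d - 1) : Finset (Finset (Fin n)))))
        (fun r : (faces G (d - 1) \ R : Finset (Finset (Fin n))) =>
          (⟨r.1, (Finset.mem_sdiff.mp r.2).1⟩ :
            (faces G (d - 1) : Finset (Finset (Fin n)))))) := by
  have hL : (lapMat n d G).submatrix
        (fun r : (faces G (d - 1) \ R : Finset (Finset (Fin n))) =>
          (⟨r.1, (Finset.mem_sdiff.mp r.2).1⟩ :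
            (faces G (d - 1) : Finset (Finset (Fin n)))))
        (fun r : (faces G (d - 1) \ R : Finset (Finset (Fin n))) =>
          (⟨r.1, (Finset.mem_sdiff.mp r.2).1⟩ :
            (faces G (d - 1) : Finset (Finset (Fin n))))) =
      Matrix.of fun i j => ∑ f ∈ faces G d, incEntry i.1 f * incEntry j.1 f := by
    ext i j
    simp only [lapMat, incMatrix, Matrix.submatrix_apply, Matrix.mul_apply, Matrix.of_apply,
      Matrix.transpose_apply]
    exact Finset.sum_coe_sort (faces G d) (fun f => incEntry i.1 f * incEntry j.1 f)
  rw [hL]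
  refine cauchy_binet_aux (faces G d)
    (fun (i : (faces G (d - 1) \ R : Finset (Finset (Fin n)))) f => incEntry i.1 f)
    (fun f j => incEntry j.1 f) _ ?_ ?_
  · intro F hF e'
    have ht : Matrix.det (Matrix.of fun (i j : (faces G (d - 1) \ R : Finset (Finset (Fin n)))) =>
        incEntry j.1 (e' i).1) = Matrix.det (subMat n d G F R e') := by
      rw [← Matrix.det_transpose]
      rfl
    have ht' : Matrix.det (Matrix.of fun (i j : (faces G (d - 1) \ R : Finset (Finset (Fin n)))) =>
        incEntry i.1 (e' j).1) = Matrix.det (subMat n d G F R e') := rfl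
    rw [ht, ht', ← pow_two]
    split_ifs with h
    · have hp := Matrix.det_permute' ((e F h).trans e'.symm) (subMat n d G F R e')
      have hs : (subMat n d G F R e').submatrix id ((e F h).trans e'.symm) =
          subMat n d G F R (e F h) := by
        ext i j
        simp [subMat]
      rw [hs] at hp
      rw [hp, mul_pow]
      rcases Int.units_eq_one_or (Equiv.Perm.sign ((e F h).trans e'.symm)) with h' | h' <;>
        simp [h']
    · have : Matrix.det (subMat n d G F R e') = 0 := by
        by_contra hne
        exact h (spanning_of_det_ne_zero n d G F R hR hF e' hne)
      simp [this]
  · intro F hF hE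
    rw [dif_neg]
    intro h
    exact hE.false (e F h)
end

section
/- Let G be a d-dimensional simplicial complex on vertex set Fin n with incidence matrix ∂, let (F,R) be a rooted forest of G, let m = |R̄| = |F|, and fix bijective enumerations α : Fin m → R̄ and β : Fin m → F. Then Σ over all fitting orientations φ of (F,R) of Λ_{α,β}(φ) equals the absolute value of det(∂_{R̄,F}) (equivalently, the cardinality of the relative homology group H_{d-1}(F,R)). -/
open Finset

open scoped Classical in
/-- For a rooted forest `(F,R)` with fixed bijective enumerations
`α : Fin m ≃ R̄` and `β : Fin m ≃ F` (where `m = |R̄| = |F|`), the sum of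
`Λ_{α,β}(φ) = sign(α,β) · sign(π_{α,β,φ}) · Π_{r∈R̄} ∂[r,φ(r)]` over all fitting
orientations `φ` of `(F,R)` equals `|det(∂_{R̄,F})|`. -/
theorem sum_sign_fittingOrientations_eq_natAbs_det
    (n d : ℕ) (hn : 1 ≤ n) (hd : 1 ≤ d)
    (G : Finset (Finset (Fin n))) (hG : IsComplex n d G)
    (F R : Finset (Finset (Fin n))) (hFR : IsRootedForest n d G F R)
    (α : Fin ((faces G (d - 1) \ R).card) ≃
      (faces G (d - 1) \ R : Finset (Finset (Fin n))))
    (β : Fin ((faces G (d - 1) \ R).card) ≃ F) :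
    (∑ φ ∈ Finset.univ.filter
        (fun φ : (faces G (d - 1) \ R : Finset (Finset (Fin n))) ≃ F =>
          ∀ r, r.1 ⊆ (φ r).1),
        Int.sign (Matrix.det (Matrix.of fun i j => incEntry (α i).1 (β j).1)) *
          ((Equiv.Perm.sign ((α.trans φ).trans β.symm) : ℤ) *
            ∏ r : (faces G (d - 1) \ R : Finset (Finset (Fin n))),
              incEntry r.1 (φ r).1)) =
      ((Matrix.det (Matrix.of fun i j => incEntry (α i).1 (β j).1)).natAbs : ℤ) := by
  rw [← Finset.mul_sum]
  have key : (∑ φ ∈ Finset.univ.filter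
        (fun φ : (faces G (d - 1) \ R : Finset (Finset (Fin n))) ≃ F =>
          ∀ r, r.1 ⊆ (φ r).1),
          ((Equiv.Perm.sign ((α.trans φ).trans β.symm) : ℤ) *
            ∏ r : (faces G (d - 1) \ R : Finset (Finset (Fin n))),
              incEntry r.1 (φ r).1)) =
      Matrix.det (Matrix.of fun i j => incEntry (α i).1 (β j).1) := by
    rw [Finset.sum_filter_of_ne, ← Matrix.det_transpose, Matrix.det_apply']
    · refine Fintype.sum_equiv (Equiv.equivCongr α.symm β.symm) _ _ ?_
      intro φ
      congr 1
      rw [← Equiv.prod_comp α]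
      refine Finset.prod_congr rfl fun i _ => ?_
      simp [Equiv.equivCongr]
    · intro φ _ hne r
      by_contra hr
      apply hne
      rw [Finset.prod_eq_zero (Finset.mem_univ r), mul_zero]
      simp [incEntry, hr]
  rw [key, Int.sign_mul_self_eq_natAbs]
end

section
/- Let G be a d-dimensional simplicial complex on vertex set Fin n with incidence matrix ∂ and Laplacian matrix L_G = ∂ · ∂ᵀ. For each rooted forest (F,R) of G fix a bijective enumeration α : Fin m → R̄ and β : Fin m → F where m = |R̄| = |F|. Then, as an identity in ℤ[x], Σ over all quadruples (F,R,φ,φ') with (F,R) a rooted forest of G and φ, φ' fitting orientations of (F,R) of sign(π_{α,β,φ}) · sign(π_{α,β,φ'}) · (Π_{r ∈ R̄} ∂[r,φ(r)] · ∂[r,φ'(r)]) · x^{|R|} = det(L_G + x·Id). -/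
open Finset

/-- Expansion of `det (M + x • 1)` in principal minors. -/
lemma aux_det_add_smul_one {m K : Type*} [Fintype m] [DecidableEq m] [CommRing K]
    (M : Matrix m m K) (x : K) :
    (M + x • (1 : Matrix m m K)).det =
      ∑ s : Finset m, (M.submatrix (Subtype.val : s → m) (Subtype.val : s → m)).det *
        x ^ (sᶜ).card := by
  let D := (Matrix.detRowAlternating : (m → K) [⋀^m]→ₗ[K] K)
  change D ((fun i => M i) + (fun i => (x • (1 : Matrix m m K)) i)) = _
  rw [D.map_add_univ]
  refine Finset.sum_congr rfl fun s _ => ?_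
  have h : s.piecewise (fun i => M i) (fun i => (x • (1 : Matrix m m K)) i) =
      fun i => (if i ∈ sᶜ then x else 1) •
        (s.piecewise (fun i => M i) (fun i => (1 : Matrix m m K) i)) i := by
    funext i j
    by_cases hi : i ∈ s
    · simp [Finset.piecewise, hi]
    · simp [Finset.piecewise, hi]
  rw [h, D.map_smul_univ, ← Matrix.det_piecewise_one_eq_submatrix_det, mul_comm, smul_eq_mul]
  rw [Finset.prod_ite_mem, Finset.univ_inter, Finset.prod_const]
  rfl

/-- The signed sum over pairs of bijections. -/
def auxT {V : Type*} [DecidableEq V] (w : V → V → ℤ) (S F : Finset V) : ℤ :=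
  ∑ φ : S ≃ F, ∑ φ' : S ≃ F, (Equiv.Perm.sign (φ.trans φ'.symm) : ℤ) *
    ∏ r : S, (w r.1 (φ r).1 * w r.1 (φ' r).1)

lemma auxT_inner {V : Type*} [DecidableEq V] (w : V → V → ℤ) (S F : Finset V) (φ : S ≃ F) :
    ∑ φ' : S ≃ F, (Equiv.Perm.sign (φ.trans φ'.symm) : ℤ) *
      ∏ r : S, (w r.1 (φ r).1 * w r.1 (φ' r).1) =
    (∏ r : S, w r.1 (φ r).1) * (Matrix.of fun i j : S => w i.1 (φ j).1).det := by
  rw [Matrix.det_apply', Finset.mul_sum]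
  let e : Equiv.Perm S ≃ (S ≃ F) :=
    { toFun := fun σ => σ.symm.trans φ
      invFun := fun φ' => φ.trans φ'.symm
      left_inv := fun σ => by ext; simp
      right_inv := fun φ' => by ext; simp }
  rw [← Equiv.sum_comp e]
  refine Finset.sum_congr rfl fun σ _ => ?_
  have h1 : φ.trans (e σ).symm = σ := e.left_inv σ
  rw [h1, Finset.prod_mul_distrib, ← Equiv.prod_comp σ (fun r : S => w r.1 ((e σ) r).1)]
  simp only [e, Equiv.coe_fn_mk, Equiv.trans_apply, Equiv.symm_apply_apply, Matrix.of_apply]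
  push_cast
  ring

lemma auxCB {V : Type*} [DecidableEq V] (w : V → V → ℤ) (S B : Finset V) :
    (Matrix.of fun i j : S => ∑ b ∈ B, w i.1 b * w j.1 b).det =
      ∑ F ∈ B.powerset, auxT w S F := by
  let g : (S → V) → ℤ := fun p =>
    (∏ r : S, w r.1 (p r)) * (Matrix.of fun i j : S => w i.1 (p j)).det
  have hg : ∀ p, ¬ Function.Injective p → g p = 0 := by
    intro p hp
    simp only [Function.Injective, not_forall] at hp
    obtain ⟨a, b, hab, hne⟩ := hp
    have : (Matrix.of fun i j : S => w i.1 (p j)).det = 0 :=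
      Matrix.det_zero_of_column_eq hne (fun k => by simp [hab])
    simp [g, this]
  have h1 : (Matrix.of fun i j : S => ∑ b ∈ B, w i.1 b * w j.1 b).det =
      ∑ p ∈ Fintype.piFinset (fun _ : S => B), g p := by
    rw [Matrix.det_apply']
    simp only [Matrix.of_apply, Finset.prod_univ_sum, Finset.mul_sum]
    rw [Finset.sum_comm]
    refine Finset.sum_congr rfl fun p _ => ?_
    simp only [g]
    rw [Matrix.det_apply', Finset.mul_sum]
    refine Finset.sum_congr rfl fun σ _ => ?_
    rw [Finset.prod_mul_distrib]
    simp only [Matrix.of_apply]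
    ring
  rw [h1, ← Finset.sum_fiberwise_of_maps_to (t := B.powerset)
    (g := fun p : S → V => Finset.univ.image p)]
  · refine Finset.sum_congr rfl fun F hF => ?_
    rw [Finset.mem_powerset] at hF
    unfold auxT
    simp only [auxT_inner]
    symm
    refine Finset.sum_bij_ne_zero (fun φ _ _ => fun r => (φ r).1) ?_ ?_ ?_ ?_
    · intro φ _ _
      simp only [Finset.mem_filter, Fintype.mem_piFinset]
      refine ⟨fun r => hF (φ r).2, ?_⟩
      ext v
      simp only [Finset.mem_image, Finset.mem_univ, true_and]
      constructor
      · rintro ⟨r, rfl⟩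
        exact (φ r).2
      · intro hv
        exact ⟨φ.symm ⟨v, hv⟩, by simp⟩
    · intro φ _ _ ψ _ _ h
      ext r
      exact congrFun h r
    · intro p hp hp0
      have hinj : Function.Injective p := by
        by_contra h
        exact hp0 (hg p h)
      have him := (Finset.mem_filter.1 hp).2
      have hmem : ∀ r, p r ∈ F := fun r => by
        rw [← him]; exact Finset.mem_image_of_mem _ (Finset.mem_univ _)
      refine ⟨Equiv.ofBijective (fun r => (⟨p r, hmem r⟩ : F)) ⟨?_, ?_⟩, Finset.mem_univ _, ?_, ?_⟩
      · intro a b hab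
        exact hinj (congrArg Subtype.val hab)
      · rintro ⟨v, hv⟩
        rw [← him] at hv
        obtain ⟨r, _, hr⟩ := Finset.mem_image.1 hv
        exact ⟨r, Subtype.ext hr⟩
      · exact hp0
      · rfl
    · intro φ _ _
      rfl
  · intro p hp
    rw [Finset.mem_powerset]
    intro v hv
    obtain ⟨r, _, rfl⟩ := Finset.mem_image.1 hv
    exact Fintype.mem_piFinset.1 hp r

lemma auxT_ne_zero {n d : ℕ} {G F R : Finset (Finset (Fin n))}
    (hF : F ⊆ faces G d) (hR : R ⊆ faces G (d - 1))
    (h : auxT incEntry (faces G (d - 1) \ R) F ≠ 0) : IsRootedForest n d G F R := by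
  obtain ⟨S, hS⟩ : ∃ S, S = faces G (d - 1) \ R := ⟨_, rfl⟩
  unfold IsRootedForest IsForest IsRoot
  rw [← hS] at h ⊢
  unfold auxT at h
  simp only [auxT_inner] at h
  obtain ⟨φ, _, hφ⟩ := Finset.exists_ne_zero_of_sum_ne_zero h
  have hSA : S ⊆ faces G (d - 1) := hS ▸ Finset.sdiff_subset
  have hdet := right_ne_zero_of_mul hφ
  let Q : Matrix S S ℚ := Matrix.of fun i j : S => (incEntry i.1 (φ j).1 : ℚ)
  have hQ : Q.det ≠ 0 := by
    have : Q.det = (((Matrix.of fun i j : S => incEntry i.1 (φ j).1).det : ℤ) : ℚ) := by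
      rw [Int.cast_det]; rfl
    rw [this]
    exact_mod_cast hdet
  have hrows := Matrix.linearIndependent_rows_of_det_ne_zero hQ
  have hcols := Matrix.linearIndependent_cols_of_det_ne_zero hQ
  let E : (F → ℚ) ≃ₗ[ℚ] (S → ℚ) := LinearEquiv.funCongrLeft ℚ ℚ φ
  have hrowsF : LinearIndependent ℚ (fun r : S => fun f : F => (incEntry r.1 f.1 : ℚ)) := by
    refine LinearIndependent.of_comp E.toLinearMap ?_
    exact hrows
  refine ⟨⟨hF, ?_⟩, hR, hrowsF, ?_⟩
  · let P : (faces G (d - 1) → ℚ) →ₗ[ℚ] (S → ℚ) :=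
      LinearMap.funLeft ℚ ℚ (fun s : S => (⟨s.1, hSA s.2⟩ : faces G (d - 1)))
    refine LinearIndependent.of_comp P ?_
    have := hcols.comp φ.symm φ.symm.injective
    have he : (P ∘ fun f : F => fun r : faces G (d - 1) => (incEntry r.1 f.1 : ℚ)) =
        Q.col ∘ φ.symm := by
      funext f s
      change (incEntry s.1 f.1 : ℚ) = (incEntry s.1 (φ (φ.symm f)).1 : ℚ)
      rw [Equiv.apply_symm_apply]
    rw [he]
    exact this
  · have htop := hrowsF.span_eq_top_of_card_eq_finrank' (by
      rw [Module.finrank_fintype_fun_eq_card]; exact Fintype.card_congr φ)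
    rw [htop]
    symm
    rw [eq_top_iff, ← htop]
    apply Submodule.span_mono
    rintro _ ⟨r, rfl⟩
    exact ⟨⟨r.1, hSA r.2⟩, rfl⟩

lemma auxRHS (n d : ℕ) (G : Finset (Finset (Fin n))) :
    Matrix.det ((lapMat n d G).map Polynomial.C +
        (Polynomial.X : Polynomial ℤ) • (1 : Matrix _ _ (Polynomial ℤ))) =
    ∑ R ∈ (faces G (d - 1)).powerset, ∑ F ∈ (faces G d).powerset,
      Polynomial.C (auxT incEntry (faces G (d - 1) \ R) F) * Polynomial.X ^ R.card := by
  rw [aux_det_add_smul_one]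
  refine Finset.sum_bij' (fun s _ => faces G (d - 1) \ s.map (Function.Embedding.subtype _))
    (fun R _ => (faces G (d - 1) \ R).subtype (· ∈ faces G (d - 1))) ?_ ?_ ?_ ?_ ?_
  · intro s _
    simp
  · intro R _
    simp
  · intro s _
    ext ⟨a, ha⟩
    simp [ha]
  · intro R hR
    rw [Finset.mem_powerset] at hR
    ext a
    simp only [Finset.mem_sdiff, Finset.mem_map, Finset.mem_subtype,
      Function.Embedding.subtype_apply, Subtype.exists, exists_and_left, exists_prop]
    have := @hR a
    grind
  · intro s _
    have hsub : s.map (Function.Embedding.subtype _) ⊆ faces G (d - 1) := by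
      intro a ha
      obtain ⟨b, _, rfl⟩ := Finset.mem_map.1 ha
      exact b.2
    have hcard : (sᶜ).card = (faces G (d - 1) \ s.map (Function.Embedding.subtype _)).card := by
      rw [Finset.card_sdiff_of_subset hsub, Finset.card_map, Finset.card_compl, Fintype.card_coe]
    have hSS : faces G (d - 1) \ (faces G (d - 1) \ s.map (Function.Embedding.subtype _)) =
        s.map (Function.Embedding.subtype _) := by
      rw [Finset.sdiff_sdiff_eq_self hsub]
    rw [hcard, hSS, ← Finset.sum_mul, ← map_sum, ← auxCB]
    congr 1
    let e : s ≃ (s.map (Function.Embedding.subtype (· ∈ faces G (d - 1))) : Finset (Finset (Fin n))) :=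
      Equiv.ofBijective
        (fun i => ⟨i.1.1, Finset.mem_map_of_mem (Function.Embedding.subtype _) i.2⟩)
        ⟨fun i j h => Subtype.ext (Subtype.ext (Subtype.mk.inj h)), by
          rintro ⟨v, hv⟩
          obtain ⟨b, hb, rfl⟩ := Finset.mem_map.1 hv
          exact ⟨⟨b, hb⟩, rfl⟩⟩
    rw [← Matrix.det_submatrix_equiv_self e, RingHom.map_det]
    congr 1
    ext1 i j
    simp only [Matrix.submatrix_apply, Matrix.map_apply, RingHom.mapMatrix_apply, Matrix.of_apply,
      lapMat, Matrix.mul_apply, Matrix.transpose_apply, incMatrix]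
    congr 1
    rw [← Finset.sum_coe_sort (faces G d)]
    rfl

open scoped Classical in
/-- As an identity in `ℤ[x]`, the sum over all quadruples
`(F,R,φ,φ')`, with `(F,R)` a rooted forest of `G` and `φ, φ'` fitting orientations of
`(F,R)`, of `sign(π_{α,β,φ})·sign(π_{α,β,φ'})·(Π_{r∈R̄} ∂[r,φ(r)]·∂[r,φ'(r)])·x^{|R|}`
equals `det(L_G + x·Id)`; here a bijective enumeration `α : Fin m ≃ R̄`,
`β : Fin m ≃ F` is fixed for each rooted forest. -/
theorem sum_bidirected_rootedForests_eq_det_lap_add_X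
    (n d : ℕ) (hn : 1 ≤ n) (hd : 1 ≤ d)
    (G : Finset (Finset (Fin n))) (hG : IsComplex n d G)
    (α : ∀ R : Finset (Finset (Fin n)),
      Fin ((faces G (d - 1) \ R).card) ≃
        (faces G (d - 1) \ R : Finset (Finset (Fin n))))
    (β : ∀ F R : Finset (Finset (Fin n)), IsRootedForest n d G F R →
      (Fin ((faces G (d - 1) \ R).card) ≃ F)) :
    (∑ F ∈ (faces G d).powerset, ∑ R ∈ (faces G (d - 1)).powerset,
        if h : IsRootedForest n d G F R then
          ∑ φ ∈ Finset.univ.filter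
              (fun φ : (faces G (d - 1) \ R : Finset (Finset (Fin n))) ≃ F =>
                ∀ r, r.1 ⊆ (φ r).1),
            ∑ φ' ∈ Finset.univ.filter
                (fun φ' : (faces G (d - 1) \ R : Finset (Finset (Fin n))) ≃ F =>
                  ∀ r, r.1 ⊆ (φ' r).1),
              Polynomial.C
                  ((Equiv.Perm.sign (((α R).trans φ).trans (β F R h).symm) : ℤ) *
                    (Equiv.Perm.sign (((α R).trans φ').trans (β F R h).symm) : ℤ) *
                    ∏ r : (faces G (d - 1) \ R : Finset (Finset (Fin n))),
                      incEntry r.1 (φ r).1 * incEntry r.1 (φ' r).1) *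
                Polynomial.X ^ R.card
        else 0) =
      Matrix.det ((lapMat n d G).map Polynomial.C +
        (Polynomial.X : Polynomial ℤ) • (1 : Matrix _ _ (Polynomial ℤ))) := by
  classical
  rw [auxRHS, Finset.sum_comm]
  refine Finset.sum_congr rfl fun R hR => Finset.sum_congr rfl fun F hF => ?_
  rw [Finset.mem_powerset] at hR hF
  split_ifs with h
  · have hz : ∀ φ : (faces G (d - 1) \ R : Finset (Finset (Fin n))) ≃ F,
        ¬ (∀ r, r.1 ⊆ (φ r).1) → ∃ r, incEntry r.1 (φ r).1 = 0 := by
      intro φ hφ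
      push Not at hφ
      obtain ⟨r, hr⟩ := hφ
      exact ⟨r, by simp [incEntry, hr]⟩
    unfold auxT
    rw [map_sum, Finset.sum_mul, Finset.sum_filter]
    refine Finset.sum_congr rfl fun φ _ => ?_
    split_ifs with h1
    · rw [map_sum, Finset.sum_mul, Finset.sum_filter]
      refine Finset.sum_congr rfl fun φ' _ => ?_
      split_ifs with h2
      · congr 3
        have hs : φ.trans φ'.symm = ((α R).symm.trans
            ((((α R).trans φ).trans (β F R h).symm).trans
            (((α R).trans φ').trans (β F R h).symm).symm)).trans (α R) := by
          ext r
          simp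
        rw [hs, Equiv.Perm.sign_symm_trans_trans, Equiv.Perm.sign_trans, Equiv.Perm.sign_symm]
        push_cast
        ring
      · obtain ⟨r, hr⟩ := hz φ' h2
        rw [Finset.prod_eq_zero (Finset.mem_univ r) (by rw [hr, mul_zero])]
        simp
    · obtain ⟨r, hr⟩ := hz φ h1
      symm
      rw [Finset.sum_eq_zero]
      · simp
      · intro φ' _
        rw [Finset.prod_eq_zero (Finset.mem_univ r) (by rw [hr, zero_mul])]
        simp
  · have : auxT incEntry (faces G (d - 1) \ R) F = 0 := by
      by_contra h0
      exact h (auxT_ne_zero hF hR h0)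
    rw [this]
    simp
end

section
/- Let G be a d-dimensional simplicial complex on vertex set Fin n with incidence matrix ∂. Work in the multivariate polynomial ring over ℤ with indeterminates w_{r,f} for r ∈ G_{d-1}, f ∈ G_d and x_r for r ∈ G_{d-1}; let ∂^w be the matrix with entry w_{r,f}·∂[r,f] in position (r,f), and let X be the diagonal matrix indexed by G_{d-1} with diagonal entry x_r. For each rooted forest (F,R) of G fix bijective enumerations α : Fin m → R̄ and β : Fin m → F where m = |R̄| = |F|. Then det(∂^w · ∂ᵀ + X) = Σ over all quadruples (F,R,φ,φ') with (F,R) a rooted forest of G and φ, φ' fitting orientations of (F,R) of sign(π_{α,β,φ}) · sign(π_{α,β,φ'}) · (Π_{r ∈ R̄} ∂[r,φ(r)] · ∂[r,φ'(r)]) · (Π_{r ∈ R̄} w_{r,φ(r)}) · (Π_{r ∈ R} x_r). -/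
open Finset

/-- Principal minor expansion of `det (M + diagonal x)`. -/
theorem aux_det_add_diagonal {m S : Type*} [Fintype m] [DecidableEq m] [CommRing S]
    (M : Matrix m m S) (x : m → S) :
    (M + Matrix.diagonal x).det =
      ∑ s : Finset m, (∏ i ∈ sᶜ, x i) *
        (M.submatrix (Subtype.val : s → m) (Subtype.val : s → m)).det := by
  have h0 : (M + Matrix.diagonal x).det =
      Matrix.detRowAlternating ((fun i => M i) + (fun i => (Matrix.diagonal x) i)) := rfl
  rw [h0, AlternatingMap.map_add_univ]
  refine Finset.sum_congr rfl fun s _ => ?_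
  have h_smul : (s.piecewise (fun i => M i) (fun i => (Matrix.diagonal x) i) : m → m → S) =
      fun i => (if i ∈ sᶜ then x i else 1) •
        (s.piecewise M.row (1 : Matrix m m S).row : m → m → S) i := by
    funext i j
    by_cases hi : i ∈ s
    · simp [hi, Finset.piecewise, Matrix.row]
    · simp [hi, Finset.piecewise, Matrix.row, Matrix.diagonal_apply, Matrix.one_apply]
  rw [h_smul]
  have h2 := (Matrix.detRowAlternating (R := S) (n := m)).map_smul_univ
    (fun i => if i ∈ sᶜ then x i else 1)
    (s.piecewise M.row (1 : Matrix m m S).row : m → m → S)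
  rw [← Matrix.det_piecewise_one_eq_submatrix_det]
  refine h2.trans ?_
  rw [smul_eq_mul, Finset.prod_ite_mem, Finset.univ_inter]
  rfl

theorem aux_det_powerset {ι S : Type*} [DecidableEq ι] [CommRing S] (P : Finset ι)
    (M : ι → ι → S) (x : ι → S) :
    (Matrix.of (fun r s : P => M r s) + Matrix.diagonal (fun r : P => x r)).det =
      ∑ R ∈ P.powerset, (∏ i ∈ R, x i) *
        (Matrix.of (fun r s : (P \ R : Finset ι) => M r s)).det := by
  rw [aux_det_add_diagonal]
  symm
  refine Finset.sum_bij (fun R _ => Finset.univ.filter (fun r : P => r.1 ∉ R)) ?_ ?_ ?_ ?_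
  · intro R _; exact Finset.mem_univ _
  · intro R hR R' hR' h
    rw [Finset.mem_powerset] at hR hR'
    ext r
    constructor
    · intro hr
      have := Finset.ext_iff.1 h ⟨r, hR hr⟩
      simpa [hr] using this
    · intro hr
      have := Finset.ext_iff.1 h ⟨r, hR' hr⟩
      simpa [hr] using this
  · intro s _
    refine ⟨(sᶜ).map (Function.Embedding.subtype _), ?_, ?_⟩
    · rw [Finset.mem_powerset]
      intro r hr
      rw [Finset.mem_map] at hr
      obtain ⟨a, _, rfl⟩ := hr
      exact a.2
    · ext r
      simp
  · intro R hR
    rw [Finset.mem_powerset] at hR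
    congr 1
    · symm
      refine Finset.prod_bij (fun r _ => r.1) ?_ ?_ ?_ ?_
      · intro a ha; simpa using ha
      · intro a _ b _ h; exact Subtype.ext h
      · intro b hb; exact ⟨⟨b, hR hb⟩, by simpa using hb, rfl⟩
      · intro a _; rfl
    · let e : (P \ R : Finset ι) ≃ (Finset.univ.filter (fun r : P => r.1 ∉ R) : Finset P) :=
        { toFun := fun r => ⟨⟨r.1, (Finset.mem_sdiff.1 r.2).1⟩, by
            simpa using (Finset.mem_sdiff.1 r.2).2⟩
          invFun := fun r => ⟨r.1.1, Finset.mem_sdiff.2 ⟨r.1.2, by simpa using r.2⟩⟩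
          left_inv := fun r => rfl
          right_inv := fun r => rfl }
      rw [← Matrix.det_submatrix_equiv_self e]
      rfl

theorem aux_noninj {m ι S : Type*} [Fintype m] [DecidableEq m] [CommRing S]
    (A B : m → ι → S) (p : m → ι) (H : ¬ Function.Injective p) :
    (∑ σ : Equiv.Perm m, ((Equiv.Perm.sign σ : ℤ) : S) * ∏ i, A (σ i) (p i) * B i (p i)) = 0 := by
  obtain ⟨i, j, hpij, hij⟩ : ∃ i j, p i = p j ∧ i ≠ j := by
    rw [Function.Injective] at H
    push Not at H
    exact H
  exact
    Finset.sum_involution (fun σ _ => σ * Equiv.swap i j)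
      (fun σ _ => by
        have : (∏ x, A (σ x) (p x)) = ∏ x, A ((σ * Equiv.swap i j) x) (p x) :=
          Fintype.prod_equiv (Equiv.swap i j) _ _ (by simp [Equiv.apply_swap_eq_self hpij])
        simp [this, Equiv.Perm.sign_swap hij, -Equiv.Perm.sign_swap', Finset.prod_mul_distrib])
      (fun σ _ _ => (not_congr Equiv.mul_swap_eq_iff).mpr hij) (fun _ _ => Finset.mem_univ _)
      fun σ _ => Equiv.mul_swap_involutive i j σ

/-- For `ψ : m ≃ F`, permutations of `m` correspond to bijections `m ≃ F`. -/
def auxPermEquiv {m F : Type*} (ψ : m ≃ F) : Equiv.Perm m ≃ (m ≃ F) where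
  toFun σ := σ.symm.trans ψ
  invFun φ := ψ.trans φ.symm
  left_inv σ := by ext; simp
  right_inv φ := by ext; simp

/-- Cauchy-Binet, expanded. -/
theorem aux_cauchy_binet {m ι S : Type*} [Fintype m] [DecidableEq m] [DecidableEq ι] [CommRing S]
    (Q : Finset ι) (A B : m → ι → S) :
    (Matrix.of (fun r s : m => ∑ f ∈ Q, A r f * B s f)).det =
      ∑ F ∈ Q.powerset, ∑ ψ : m ≃ F, ∑ φ : m ≃ F,
        ((Equiv.Perm.sign (φ.trans ψ.symm) : ℤ) : S) *
          ((∏ r, A r (φ r)) * ∏ r, B r (ψ r)) := by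
  rw [Matrix.det_apply']
  simp only [Matrix.of_apply, Finset.prod_univ_sum, Finset.mul_sum]
  rw [Finset.sum_comm]
  rw [← Finset.sum_filter_of_ne (p := Function.Injective)
    (fun p _ h => by by_contra hp; exact h (aux_noninj A B p hp))]
  symm
  rw [Finset.sum_sigma']
  refine Finset.sum_bij (fun (a : Σ F : Finset ι, m ≃ F) _ => fun r => (a.2 r).1) ?_ ?_ ?_ ?_
  · rintro ⟨F, ψ⟩ h
    simp only [Finset.mem_sigma, Finset.mem_powerset] at h
    simp only [Finset.mem_filter, Fintype.mem_piFinset]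
    exact ⟨fun r => h.1 (ψ r).2, fun a b hab => ψ.injective (Subtype.ext hab)⟩
  · rintro ⟨F, ψ⟩ _ ⟨F', ψ'⟩ _ h
    have hF : F = F' := by
      ext f
      constructor
      · intro hf
        have := congrFun h (ψ.symm ⟨f, hf⟩)
        simp only [Equiv.apply_symm_apply] at this
        rw [this]; exact (ψ' _).2
      · intro hf
        have := congrFun h (ψ'.symm ⟨f, hf⟩)
        simp only [Equiv.apply_symm_apply] at this
        rw [← this]; exact (ψ _).2
    subst hF
    congr 1
    ext r
    exact congrFun h r
  · intro p hp
    simp only [Finset.mem_filter, Fintype.mem_piFinset] at hp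
    refine ⟨⟨Finset.univ.image p, Equiv.ofBijective
      (fun r => ⟨p r, Finset.mem_image_of_mem p (Finset.mem_univ r)⟩) ⟨?_, ?_⟩⟩, ?_, ?_⟩
    · intro a b hab
      exact hp.2 (congrArg Subtype.val hab)
    · rintro ⟨f, hf⟩
      obtain ⟨r, _, rfl⟩ := Finset.mem_image.1 hf
      exact ⟨r, rfl⟩
    · simp only [Finset.mem_sigma, Finset.mem_powerset, Finset.mem_univ, and_true]
      intro f hf
      obtain ⟨r, _, rfl⟩ := Finset.mem_image.1 hf
      exact hp.1 r
    · rfl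
  · rintro ⟨F, ψ⟩ _
    refine (Fintype.sum_equiv (auxPermEquiv ψ) _ _ fun σ => ?_).symm
    have h1 : (auxPermEquiv ψ σ).trans ψ.symm = σ⁻¹ := by
      ext; simp [auxPermEquiv]
    rw [h1, Equiv.Perm.sign_inv, Finset.prod_mul_distrib]
    congr 2
    rw [← Equiv.prod_comp σ (fun r => A r ((auxPermEquiv ψ σ) r).1)]
    simp [auxPermEquiv]

theorem aux_vanish (n d : ℕ) (G F R : Finset (Finset (Fin n)))
    (hF : F ⊆ faces G d) (hR : R ⊆ faces G (d - 1)) (h : ¬ IsRootedForest n d G F R)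
    (φ : (faces G (d - 1) \ R : Finset (Finset (Fin n))) ≃ F) :
    ∑ ψ : (faces G (d - 1) \ R : Finset (Finset (Fin n))) ≃ F,
      (Equiv.Perm.sign (φ.trans ψ.symm) : ℤ) * ∏ r, incEntry r.1 (ψ r).1 = 0 := by
  set N : Matrix (faces G (d - 1) \ R : Finset (Finset (Fin n)))
    (faces G (d - 1) \ R : Finset (Finset (Fin n))) ℤ :=
    Matrix.of (fun r s => incEntry r.1 (φ s).1) with hN
  have hdet : ∑ ψ : (faces G (d - 1) \ R : Finset (Finset (Fin n))) ≃ F,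
      (Equiv.Perm.sign (φ.trans ψ.symm) : ℤ) * ∏ r, incEntry r.1 (ψ r).1 = N.det := by
    rw [Matrix.det_apply']
    refine (Fintype.sum_equiv (auxPermEquiv φ) _ _ fun σ => ?_).symm
    have h1 : φ.trans (auxPermEquiv φ σ).symm = σ := by
      ext; simp [auxPermEquiv]
    rw [h1]
    congr 1
    rw [← Equiv.prod_comp σ (fun r => incEntry r.1 ((auxPermEquiv φ σ) r).1)]
    simp [auxPermEquiv, hN]
  rw [hdet]
  by_contra hne
  apply h
  have hneQ : (N.map (Int.castRingHom ℚ)).det ≠ 0 := by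
    have := RingHom.map_det (Int.castRingHom ℚ) N
    rw [RingHom.mapMatrix_apply] at this
    rw [← this]
    simpa using hne
  have hrows := Matrix.linearIndependent_rows_of_det_ne_zero hneQ
  have hcols := Matrix.linearIndependent_cols_of_det_ne_zero hneQ
  have hrows' : LinearIndependent ℚ
      (fun r : (faces G (d - 1) \ R : Finset (Finset (Fin n))) =>
        fun f : F => (incEntry r.1 f.1 : ℚ)) := by
    refine LinearIndependent.of_comp (LinearMap.funLeft ℚ ℚ φ) ?_
    exact hrows
  refine ⟨⟨hF, ?_⟩, hR, hrows', ?_⟩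
  · refine LinearIndependent.of_comp (LinearMap.funLeft ℚ ℚ
      (fun r : (faces G (d - 1) \ R : Finset (Finset (Fin n))) =>
        (⟨r.1, (Finset.mem_sdiff.1 r.2).1⟩ : faces G (d - 1)))) ?_
    rw [← linearIndependent_equiv φ]
    exact hcols
  · have htop := hrows'.span_eq_top_of_card_eq_finrank' (by
      rw [Module.finrank_fintype_fun_eq_card]; exact Fintype.card_congr φ)
    rw [htop]
    symm
    rw [eq_top_iff, ← htop]
    apply Submodule.span_mono
    rintro _ ⟨r, rfl⟩
    exact ⟨⟨r.1, (Finset.mem_sdiff.1 r.2).1⟩, rfl⟩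

open MvPolynomial in
open scoped Classical in
/-- In the multivariate polynomial ring with indeterminates `w_{r,f}`
(`r ∈ G_{d-1}`, `f ∈ G_d`) and `x_r` (`r ∈ G_{d-1}`), let `∂^w` have entries
`w_{r,f}·∂[r,f]` and let `X` be the diagonal matrix of the `x_r`. Then
`det(∂^w·∂ᵀ + X)` equals the sum over all quadruples `(F,R,φ,φ')`, with `(F,R)` a
rooted forest of `G` and `φ, φ'` fitting orientations, of
`sign(π_{α,β,φ})·sign(π_{α,β,φ'})·(Π_{r∈R̄} ∂[r,φ(r)]·∂[r,φ'(r)])·(Π_{r∈R̄} w_{r,φ(r)})·(Π_{r∈R} x_r)`. -/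
theorem det_weighted_directed_lap_eq_sum_bidirected_rootedForests
    (n d : ℕ) (hn : 1 ≤ n) (hd : 1 ≤ d)
    (G : Finset (Finset (Fin n))) (hG : IsComplex n d G)
    (α : ∀ R : Finset (Finset (Fin n)),
      Fin ((faces G (d - 1) \ R).card) ≃
        (faces G (d - 1) \ R : Finset (Finset (Fin n))))
    (β : ∀ F R : Finset (Finset (Fin n)), IsRootedForest n d G F R →
      (Fin ((faces G (d - 1) \ R).card) ≃ F)) :
    Matrix.det
        ((Matrix.of fun (r : (faces G (d - 1) : Finset (Finset (Fin n))))
              (f : (faces G d : Finset (Finset (Fin n)))) =>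
            X (Sum.inl (r, f)) *
              (C (incEntry r.1 f.1) :
                MvPolynomial
                  (((faces G (d - 1) : Finset (Finset (Fin n))) ×
                      (faces G d : Finset (Finset (Fin n)))) ⊕
                    (faces G (d - 1) : Finset (Finset (Fin n)))) ℤ)) *
          (Matrix.of fun (r : (faces G (d - 1) : Finset (Finset (Fin n))))
              (f : (faces G d : Finset (Finset (Fin n)))) =>
            (C (incEntry r.1 f.1) :
              MvPolynomial
                (((faces G (d - 1) : Finset (Finset (Fin n))) ×
                    (faces G d : Finset (Finset (Fin n)))) ⊕
                  (faces G (d - 1) : Finset (Finset (Fin n)))) ℤ)).transpose +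
          Matrix.diagonal (fun r => X (Sum.inr r))) =
      ∑ F ∈ (faces G d).powerset, ∑ R ∈ (faces G (d - 1)).powerset,
        if h : IsRootedForest n d G F R then
          ∑ φ ∈ Finset.univ.filter
              (fun φ : (faces G (d - 1) \ R : Finset (Finset (Fin n))) ≃ F =>
                ∀ r, r.1 ⊆ (φ r).1),
            ∑ φ' ∈ Finset.univ.filter
                (fun φ' : (faces G (d - 1) \ R : Finset (Finset (Fin n))) ≃ F =>
                  ∀ r, r.1 ⊆ (φ' r).1),
              C ((Equiv.Perm.sign (((α R).trans φ).trans (β F R h).symm) : ℤ) *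
                    (Equiv.Perm.sign (((α R).trans φ').trans (β F R h).symm) : ℤ) *
                    ∏ r : (faces G (d - 1) \ R : Finset (Finset (Fin n))),
                      incEntry r.1 (φ r).1 * incEntry r.1 (φ' r).1) *
                (∏ r : (faces G (d - 1) \ R : Finset (Finset (Fin n))),
                  X (Sum.inl
                    (⟨r.1, (Finset.mem_sdiff.mp r.2).1⟩, ⟨(φ r).1, h.1.1 (φ r).2⟩))) *
                (∏ r ∈ R.attach, X (Sum.inr ⟨r.1, h.2.1 r.2⟩))
        else 0 := by
  classical
  let W : Finset (Fin n) → Finset (Fin n) → MvPolynomial (((faces G (d - 1)) × (faces G d)) ⊕ (faces G (d - 1))) ℤ := fun r f =>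
    if h : r ∈ (faces G (d - 1)) ∧ f ∈ (faces G d) then X (Sum.inl (⟨r, h.1⟩, ⟨f, h.2⟩)) else 0
  let B : Finset (Fin n) → Finset (Fin n) → MvPolynomial (((faces G (d - 1)) × (faces G d)) ⊕ (faces G (d - 1))) ℤ := fun r f =>
    C (incEntry r f)
  let x : Finset (Fin n) → MvPolynomial (((faces G (d - 1)) × (faces G d)) ⊕ (faces G (d - 1))) ℤ := fun r =>
    if h : r ∈ (faces G (d - 1)) then X (Sum.inr ⟨r, h⟩) else 0
  have hW : ∀ r f (hr : r ∈ (faces G (d - 1))) (hf : f ∈ (faces G d)), W r f = X (Sum.inl (⟨r, hr⟩, ⟨f, hf⟩)) := by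
    intro r f hr hf
    simp only [W]
    rw [dif_pos ⟨hr, hf⟩]
  have hx : ∀ r (hr : r ∈ (faces G (d - 1))), x r = X (Sum.inr ⟨r, hr⟩) := by
    intro r hr
    simp only [x]
    rw [dif_pos hr]
  trans (Matrix.of (fun r s : (faces G (d - 1)) => ∑ f ∈ (faces G d), (W r f * B r f) * B s f) +
      Matrix.diagonal (fun r : (faces G (d - 1)) => x r)).det
  · congr 1
    congr 1
    · ext1 r s
      rw [Matrix.mul_apply, Matrix.of_apply, ← Finset.sum_coe_sort (faces G d)]
      refine Finset.sum_congr rfl fun f _ => ?_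
      rw [hW r.1 f.1 r.2 f.2]
      rfl
    · congr 1
      funext r
      exact (hx r.1 r.2).symm
  rw [aux_det_powerset (faces G (d - 1)) (fun r s => ∑ f ∈ (faces G d), (W r f * B r f) * B s f) x, Finset.sum_comm]
  refine Finset.sum_congr rfl fun R hR => ?_
  rw [aux_cauchy_binet (faces G d) (fun (r : ((faces G (d - 1)) \ R : Finset (Finset (Fin n)))) f => W r f * B r f)
    (fun r f => B r f), Finset.mul_sum]
  refine Finset.sum_congr rfl fun F hF => ?_
  rw [Finset.mem_powerset] at hR hF
  rw [Finset.sum_comm]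
  split_ifs with h
  · rw [Finset.sum_filter_of_ne]
    · rw [Finset.mul_sum]
      refine Finset.sum_congr rfl fun φ _ => ?_
      rw [Finset.sum_filter_of_ne]
      · rw [Finset.mul_sum]
        refine Finset.sum_congr rfl fun ψ _ => ?_
        have hx' : ∏ i ∈ R, x i = ∏ r ∈ R.attach, X (Sum.inr ⟨r.1, h.2.1 r.2⟩) := by
          rw [← Finset.prod_attach]
          exact Finset.prod_congr rfl fun r _ => hx _ _
        have hW' : ∏ r : ((faces G (d - 1)) \ R : Finset (Finset (Fin n))), W r.1 (φ r).1 =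
            ∏ r : ((faces G (d - 1)) \ R : Finset (Finset (Fin n))), X (Sum.inl
              (⟨r.1, (Finset.mem_sdiff.mp r.2).1⟩, ⟨(φ r).1, h.1.1 (φ r).2⟩)) :=
          Finset.prod_congr rfl fun r _ => hW _ _ _ _
        have hs : (Equiv.Perm.sign (φ.trans ψ.symm) : ℤ) =
            (Equiv.Perm.sign (((α R).trans φ).trans (β F R h).symm) : ℤ) *
            (Equiv.Perm.sign (((α R).trans ψ).trans (β F R h).symm) : ℤ) := by
          have e1 : φ.trans ψ.symm = ((α R).symm.trans
              ((((α R).trans φ).trans (β F R h).symm).trans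
                (((α R).trans ψ).trans (β F R h).symm)⁻¹)).trans (α R) := by
            ext r
            simp [Equiv.Perm.inv_def]
          rw [e1, Equiv.Perm.sign_symm_trans_trans, Equiv.Perm.sign_trans,
            Equiv.Perm.sign_inv, Units.val_mul, mul_comm]
        rw [← hx', ← hW', hs, Finset.prod_mul_distrib, Finset.prod_mul_distrib]
        simp only [B, map_mul, map_prod, eq_intCast, Int.cast_mul]
        ring
      · intro ψ _ hne r
        by_contra hr
        apply hne
        rw [Finset.prod_eq_zero (Finset.mem_univ r)]
        · simp
        · simp [incEntry, hr]
    · intro φ _ hne r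
      by_contra hr
      apply hne
      refine Finset.sum_eq_zero fun ψ _ => ?_
      rw [Finset.prod_eq_zero (Finset.mem_univ r)]
      · simp
      · simp [incEntry, hr]
  · rw [Finset.sum_eq_zero, mul_zero]
    intro φ _
    have hv := congrArg (C : ℤ →+* MvPolynomial (((faces G (d - 1)) × (faces G d)) ⊕ (faces G (d - 1))) ℤ)
      (aux_vanish n d G F R hF hR h φ)
    rw [map_sum, map_zero] at hv
    trans (∏ r : ((faces G (d - 1)) \ R : Finset (Finset (Fin n))), W r.1 (φ r).1 * B r.1 (φ r).1) * 0
    · rw [← hv, Finset.mul_sum]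
      refine Finset.sum_congr rfl fun ψ _ => ?_
      simp only [B, map_mul, map_prod, eq_intCast]
      ring
    · rw [mul_zero]
end

section
/- Let G be a d-dimensional simplicial complex on vertex set Fin n with incidence matrix ∂, let (F,R) be a rooted forest of G with m = |R̄| = |F|, fix bijective enumerations α : Fin m → R̄ and β : Fin m → F, and let φ, φ' be two fitting orientations of (F,R). Then sign(π_{α,β,φ}) · sign(π_{α,β,φ'}) · Π_{r ∈ R̄} ∂[r,φ(r)] · ∂[r,φ'(r)] = (−1)^{s}, where s is the number of oriented strips of (φ,φ'). -/
open Finset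

theorem strips_aux_prod {X : Type*} [Fintype X] [DecidableEq X] (w : X → ℤ)
    (σ : Equiv.Perm X) :
    (Equiv.Perm.sign σ : ℤ) * ∏ r ∈ σ.support, w r =
      ∏ c ∈ σ.cycleFactorsFinset, ((Equiv.Perm.sign c : ℤ) * ∏ r ∈ c.support, w r) := by
  induction σ using Equiv.Perm.cycle_induction_on with
  | base_one => simp
  | base_cycles σ hσ => simp [Equiv.Perm.cycleFactorsFinset_eq_singleton_self_iff.2 hσ]
  | induction_disjoint σ τ hd hc ih1 ih2 =>
    rw [hd.cycleFactorsFinset_mul_eq_union,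
      Finset.prod_union hd.disjoint_cycleFactorsFinset, ← ih1, ← ih2,
      hd.support_mul, Finset.prod_union hd.disjoint_support, Equiv.Perm.sign_mul]
    push_cast
    ring

theorem strips_aux {X : Type*} [Fintype X] [DecidableEq X] (w : X → ℤ)
    (σ : Equiv.Perm X) (hw : ∀ x, w x = 1 ∨ w x = -1) (hf : ∀ x, σ x = x → w x = 1) :
    (Equiv.Perm.sign σ : ℤ) * ∏ r, w r =
      (-1 : ℤ) ^ ((σ.cycleFactorsFinset.filter fun c =>
        (∏ r ∈ c.support, w r) = (-1 : ℤ) ^ c.support.card).card) := by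
  have h1 : ∏ r, w r = ∏ r ∈ σ.support, w r := by
    symm
    apply Finset.prod_subset (Finset.subset_univ _)
    intro x _ hx
    exact hf x (by simpa using hx)
  have hp : ∀ s : Finset X, (∏ r ∈ s, w r) = 1 ∨ (∏ r ∈ s, w r) = -1 := by
    intro s
    induction s using Finset.induction_on with
    | empty => simp
    | insert a s ha ih =>
      rw [Finset.prod_insert ha]
      rcases hw a with h | h <;> rcases ih with h' | h' <;> simp [h, h']
  rw [h1, strips_aux_prod, Finset.card_filter, ← Finset.prod_pow_eq_pow_sum]
  apply Finset.prod_congr rfl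
  intro c hc
  have hcyc := (Equiv.Perm.mem_cycleFactorsFinset_iff.1 hc).1
  rw [hcyc.sign]
  push_cast
  rcases hp c.support with h | h <;> rcases neg_one_pow_eq_or ℤ c.support.card with h' | h' <;>
    rw [h, h'] <;> norm_num

theorem incEntry_cases {n : ℕ} {r f : Finset (Fin n)} (h : r ⊆ f) :
    incEntry r f = 1 ∨ incEntry r f = -1 := by
  unfold incEntry
  rw [if_pos h]
  exact neg_one_pow_eq_or ℤ _

/-- For two fitting orientations `φ, φ'` of a rooted forest `(F,R)`,
`sign(π_{α,β,φ})·sign(π_{α,β,φ'})·Π_{r∈R̄} ∂[r,φ(r)]·∂[r,φ'(r)] = (−1)^s`, where `s` is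
the number of oriented strips of `(φ,φ')`, i.e. of orbits `C` of `θ = φ⁻¹∘φ'` with
`|C| ≥ 2` (the cycles of `θ`) such that `Π_{r∈C} ∂[r,φ(r)]·∂[r,φ'(r)] = (−1)^{|C|}`. -/
theorem sign_product_eq_neg_one_pow_orientedStrips
    (n d : ℕ) (hn : 1 ≤ n) (hd : 1 ≤ d)
    (G : Finset (Finset (Fin n))) (hG : IsComplex n d G)
    (F R : Finset (Finset (Fin n))) (hFR : IsRootedForest n d G F R)
    (α : Fin ((faces G (d - 1) \ R).card) ≃
      (faces G (d - 1) \ R : Finset (Finset (Fin n))))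
    (β : Fin ((faces G (d - 1) \ R).card) ≃ F)
    (φ φ' : (faces G (d - 1) \ R : Finset (Finset (Fin n))) ≃ F)
    (hφ : ∀ r, r.1 ⊆ (φ r).1) (hφ' : ∀ r, r.1 ⊆ (φ' r).1) :
    (Equiv.Perm.sign ((α.trans φ).trans β.symm) : ℤ) *
        (Equiv.Perm.sign ((α.trans φ').trans β.symm) : ℤ) *
        ∏ r : (faces G (d - 1) \ R : Finset (Finset (Fin n))),
          incEntry r.1 (φ r).1 * incEntry r.1 (φ' r).1 =
      (-1 : ℤ) ^
        ((Equiv.Perm.cycleFactorsFinset (φ'.trans φ.symm) |>.filter fun c =>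
            (∏ r ∈ c.support, incEntry r.1 (φ r).1 * incEntry r.1 (φ' r).1) =
              (-1 : ℤ) ^ c.support.card).card) := by
  have hs : (Equiv.Perm.sign ((α.trans φ).trans β.symm) : ℤ) *
        (Equiv.Perm.sign ((α.trans φ').trans β.symm) : ℤ) =
        (Equiv.Perm.sign (φ'.trans φ.symm) : ℤ) := by
    have e : (α.trans φ').trans β.symm =
        ((α.trans φ).trans β.symm) * ((α.trans (φ'.trans φ.symm)).trans α.symm) := by
      ext x
      simp
    have e2 : Equiv.Perm.sign ((α.trans (φ'.trans φ.symm)).trans α.symm) =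
        Equiv.Perm.sign (φ'.trans φ.symm) :=
      Equiv.Perm.sign_trans_trans_symm (φ'.trans φ.symm) α
    rw [e, Equiv.Perm.sign_mul, e2]
    rcases Int.units_eq_one_or (Equiv.Perm.sign ((α.trans φ).trans β.symm)) with h | h <;>
      rw [h] <;> simp
  rw [hs]
  refine strips_aux (fun r => incEntry r.1 (φ r).1 * incEntry r.1 (φ' r).1) _ ?_ ?_
  · intro r
    rcases incEntry_cases (hφ r) with h | h <;> rcases incEntry_cases (hφ' r) with h' | h' <;>
      simp [h, h']
  · intro r hr
    have h2 : φ' r = φ r := by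
      have := congrArg φ hr
      simpa using this
    rcases incEntry_cases (hφ r) with h | h <;> simp [h2, h]
end

section
/- Let G be a d-dimensional simplicial complex on vertex set Fin n with incidence matrix ∂ and Laplacian matrix L_G = ∂ · ∂ᵀ. Then, as an identity in ℤ[x], Σ over all quadruples (F,R,φ,φ') with (F,R) a rooted forest of G and φ, φ' fitting orientations of (F,R) of (−1)^{s(φ,φ')} · x^{|R|} = det(L_G + x·Id), where s(φ,φ') is the number of oriented strips of (φ,φ'). -/
open Finset

theorem aux_minors {m : Type*} [Fintype m] [DecidableEq m] (M : Matrix m m ℤ) :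
    Matrix.det (M.map Polynomial.C + (Polynomial.X : Polynomial ℤ) • (1 : Matrix m m (Polynomial ℤ)))
      = ∑ s : Finset m, Polynomial.C
          (M.submatrix (Subtype.val : s → m) (Subtype.val : s → m)).det *
            Polynomial.X ^ (sᶜ).card := by
  let D := (Matrix.detRowAlternating : (m → Polynomial ℤ) [⋀^m]→ₗ[Polynomial ℤ] Polynomial ℤ)
  have h1 : Matrix.det (M.map Polynomial.C +
      (Polynomial.X : Polynomial ℤ) • (1 : Matrix m m (Polynomial ℤ))) =
      ∑ s : Finset m, D (s.piecewise (fun i => (M.map Polynomial.C) i)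
        (fun i => ((Polynomial.X : Polynomial ℤ) • (1 : Matrix m m (Polynomial ℤ))) i)) := by
    rw [← D.map_add_univ]; rfl
  rw [h1]
  refine Finset.sum_congr rfl fun s _ => ?_
  have h2 : s.piecewise (fun i => (M.map Polynomial.C) i)
        (fun i => ((Polynomial.X : Polynomial ℤ) • (1 : Matrix m m (Polynomial ℤ))) i) =
      fun i => (if i ∈ s then (1 : Polynomial ℤ) else Polynomial.X) •
        s.piecewise (fun i => (M.map Polynomial.C) i)
          (fun i => (1 : Matrix m m (Polynomial ℤ)) i) i := by
    funext i j
    by_cases h : i ∈ s <;> simp [Finset.piecewise, h]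
  rw [h2, D.map_smul_univ]
  have h3 : D (s.piecewise (fun i => (M.map Polynomial.C) i)
          (fun i => (1 : Matrix m m (Polynomial ℤ)) i)) =
      ((M.map Polynomial.C).submatrix (Subtype.val : s → m) (Subtype.val : s → m)).det :=
    Matrix.det_piecewise_one_eq_submatrix_det (M.map Polynomial.C) s
  rw [h3, Matrix.submatrix_map, ← RingHom.mapMatrix_apply, ← RingHom.map_det, smul_eq_mul, mul_comm]
  congr 1
  rw [Finset.prod_ite]
  simp only [Finset.prod_const, one_pow, one_mul]
  congr 2
  ext; simp

theorem aux_cauchyBinet {ι α : Type*} [Fintype ι] [DecidableEq ι] [DecidableEq α]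
    (T : Finset α) (a : ι → α → ℤ) :
    Matrix.det (Matrix.of fun i j => ∑ f ∈ T, a i f * a j f) =
      ∑ F ∈ T.powerset, ∑ φ : ι ≃ F, (∏ i, a i (φ i).1) *
        Matrix.det (Matrix.of fun i j => a i (φ j).1) := by
  have h1 : Matrix.det (Matrix.of fun i j => ∑ f ∈ T, a i f * a j f) =
      ∑ p ∈ Fintype.piFinset (fun _ : ι => T), (∏ i, a i (p i)) *
        Matrix.det (Matrix.of fun i j => a i (p j)) := by
    simp only [Matrix.det_apply', Matrix.of_apply, Finset.prod_univ_sum, Finset.mul_sum]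
    rw [Finset.sum_comm]
    refine Finset.sum_congr rfl fun p _ => Finset.sum_congr rfl fun σ _ => ?_
    rw [Finset.prod_mul_distrib]; ring
  rw [h1, ← Finset.sum_fiberwise_of_maps_to (t := T.powerset)
    (g := fun p : ι → α => Finset.univ.image p)]
  swap
  · intro p hp
    rw [Fintype.mem_piFinset] at hp
    rw [Finset.mem_powerset]
    intro x hx
    obtain ⟨i, _, rfl⟩ := Finset.mem_image.1 hx
    exact hp i
  refine Finset.sum_congr rfl fun F hF => ?_
  rw [Finset.mem_powerset] at hF
  symm
  refine Finset.sum_of_injOn (fun φ : ι ≃ F => fun i => (φ i).1) ?_ ?_ ?_ ?_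
  · intro φ _ φ' _ h
    ext i
    exact congrFun h i
  · intro φ _
    simp only [Finset.coe_filter, Set.mem_ofPred_eq, Fintype.mem_piFinset]
    refine ⟨fun i => hF (φ i).2, ?_⟩
    ext x
    simp only [Finset.mem_image, Finset.mem_univ, true_and]
    constructor
    · rintro ⟨i, rfl⟩; exact (φ i).2
    · intro hx; exact ⟨φ.symm ⟨x, hx⟩, by simp⟩
  · intro p hp hnot
    rw [Finset.mem_filter] at hp
    obtain ⟨_, him⟩ := hp
    have hninj : ¬ Function.Injective p := by
      intro hinj
      apply hnot
      have hmem : ∀ i, p i ∈ F := fun i => him ▸ Finset.mem_image_of_mem p (Finset.mem_univ i)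
      refine ⟨Equiv.ofBijective (fun i => (⟨p i, hmem i⟩ : F)) ⟨?_, ?_⟩, by simp, rfl⟩
      · intro i j h
        exact hinj (congrArg Subtype.val h)
      · rintro ⟨x, hx⟩
        rw [← him] at hx
        obtain ⟨i, _, rfl⟩ := Finset.mem_image.1 hx
        exact ⟨i, rfl⟩
    rw [Function.Injective] at hninj
    push Not at hninj
    obtain ⟨i, j, hij, hne⟩ := hninj
    rw [Matrix.det_zero_of_column_eq hne (by intro k; simp [hij]), mul_zero]
  · intro φ _; rfl

theorem aux_det_expand {ι β : Type*} [Fintype ι] [DecidableEq ι] [Fintype β] [DecidableEq β]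
    (a : ι → β → ℤ) (φ : ι ≃ β) :
    Matrix.det (Matrix.of fun i j => a i (φ j)) =
      ∑ φ' : ι ≃ β, (Equiv.Perm.sign (φ'.trans φ.symm) : ℤ) * ∏ i, a i (φ' i) := by
  rw [Matrix.det_apply']
  symm
  refine Fintype.sum_equiv
    ⟨fun φ' : ι ≃ β => (φ.trans φ'.symm : Equiv.Perm ι),
     fun σ => σ.symm.trans φ, fun φ' => by ext; simp, fun σ => by ext; simp⟩ _ _ ?_
  intro φ'
  have h1 : (φ.trans φ'.symm : Equiv.Perm ι) = (φ'.trans φ.symm : Equiv.Perm ι)⁻¹ := by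
    ext; rfl
  simp only [Equiv.coe_fn_mk, Matrix.of_apply]
  congr 1
  · rw [h1, Equiv.Perm.sign_inv]; simp
  · rw [← Equiv.prod_comp (φ.trans φ'.symm)]
    simp

theorem aux_strips {ι : Type*} [Fintype ι] [DecidableEq ι] (θ : Equiv.Perm ι) (u : ι → ℤ)
    (hu : ∀ i, u i = 1 ∨ u i = -1) (hfix : ∀ i, θ i = i → u i = 1) :
    (-1 : ℤ) ^ ((θ.cycleFactorsFinset.filter fun c =>
        ∏ r ∈ c.support, u r = (-1 : ℤ) ^ c.support.card).card) =
      (Equiv.Perm.sign θ : ℤ) * ∏ i, u i := by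
  have hs : (Equiv.Perm.sign θ : ℤ) =
      ∏ c ∈ θ.cycleFactorsFinset, (-(-1 : ℤ) ^ c.support.card) := by
    rw [Equiv.Perm.sign_of_cycleType', Equiv.Perm.cycleType_def, Multiset.map_map]
    change ((∏ c ∈ θ.cycleFactorsFinset, (-(-1 : ℤˣ) ^ c.support.card) : ℤˣ) : ℤ) = _
    push_cast
    rfl
  have hp : ∏ i, u i = ∏ c ∈ θ.cycleFactorsFinset, ∏ r ∈ c.support, u r := by
    rw [← Finset.prod_biUnion]
    · symm
      apply Finset.prod_subset (Finset.subset_univ _)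
      intro i _ hi
      apply hfix
      by_contra h
      apply hi
      rw [Finset.mem_biUnion]
      refine ⟨θ.cycleOf i, ?_, ?_⟩
      · rw [Equiv.Perm.cycleOf_mem_cycleFactorsFinset_iff, Equiv.Perm.mem_support]; exact h
      · rw [Equiv.Perm.mem_support_cycleOf_iff]
        exact ⟨Equiv.Perm.SameCycle.refl _ _, Equiv.Perm.mem_support.2 h⟩
    · intro c hc c' hc' hne
      exact (θ.cycleFactorsFinset_pairwise_disjoint hc hc' hne).disjoint_support
  rw [hs, hp, ← Finset.prod_mul_distrib, Finset.card_filter, ← Finset.prod_pow_eq_pow_sum]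
  refine Finset.prod_congr rfl fun c _ => ?_
  have h1 : ∀ s : Finset ι, ∏ r ∈ s, u r = 1 ∨ ∏ r ∈ s, u r = -1 := by
    intro s
    induction s using Finset.induction_on with
    | empty => simp
    | insert i s hi ih =>
      rw [Finset.prod_insert hi]
      rcases hu i with h | h <;> rcases ih with h' | h' <;> simp [h, h']
  rcases h1 c.support with h | h <;> rcases neg_one_pow_eq_or ℤ c.support.card with h' | h' <;>
    simp [h, h']

theorem aux_rooted_s12 {n d : ℕ} {G F R : Finset (Finset (Fin n))}
    (hF : F ⊆ faces G d) (hR : R ⊆ faces G (d - 1))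
    (φ : (faces G (d - 1) \ R : Finset (Finset (Fin n))) ≃ F)
    (hdet : Matrix.det (Matrix.of fun i j : (faces G (d - 1) \ R : Finset (Finset (Fin n))) =>
      incEntry i.1 (φ j).1) ≠ 0) : IsRootedForest n d G F R := by
  set A : Matrix (faces G (d - 1) \ R : Finset (Finset (Fin n)))
    (faces G (d - 1) \ R : Finset (Finset (Fin n))) ℚ :=
    Matrix.of fun i j => (incEntry i.1 (φ j).1 : ℚ) with hA
  have hdetA : A.det ≠ 0 := by
    have := Int.cast_det (R := ℚ)
      (Matrix.of fun i j : (faces G (d - 1) \ R : Finset (Finset (Fin n))) =>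
      incEntry i.1 (φ j).1)
    have h2 : A = (Matrix.of fun i j : (faces G (d - 1) \ R : Finset (Finset (Fin n))) =>
      incEntry i.1 (φ j).1).map (fun x : ℤ => (x : ℚ)) := by ext; simp [hA]
    rw [h2, ← this]
    exact_mod_cast hdet
  have hrows := Matrix.linearIndependent_rows_of_det_ne_zero hdetA
  have hcols := Matrix.linearIndependent_cols_of_det_ne_zero hdetA
  have hrow' : LinearIndependent ℚ
      (fun r : (faces G (d - 1) \ R : Finset (Finset (Fin n))) =>
        fun f : F => (incEntry r.1 f.1 : ℚ)) := by
    apply LinearIndependent.of_comp (LinearMap.funLeft ℚ ℚ φ)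
    exact hrows
  refine ⟨⟨hF, ?_⟩, hR, hrow', ?_⟩
  · rw [← linearIndependent_equiv φ]
    apply LinearIndependent.of_comp (LinearMap.funLeft ℚ ℚ
      (fun r : (faces G (d - 1) \ R : Finset (Finset (Fin n))) =>
        (⟨r.1, (Finset.mem_sdiff.1 r.2).1⟩ : faces G (d - 1))))
    exact hcols
  · have htop := hrow'.span_eq_top_of_card_eq_finrank'
      (by rw [Module.finrank_fintype_fun_eq_card]; exact Fintype.card_congr φ)
    rw [htop]
    symm
    rw [eq_top_iff, ← htop]
    apply Submodule.span_mono
    rintro _ ⟨r, rfl⟩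
    exact ⟨⟨r.1, (Finset.mem_sdiff.1 r.2).1⟩, rfl⟩

theorem aux_incEntry {n : ℕ} (r f : Finset (Fin n)) (h : r ⊆ f) :
    incEntry r f = 1 ∨ incEntry r f = -1 := by
  rw [incEntry, if_pos h]
  exact neg_one_pow_eq_or ℤ _

theorem aux_det_lap {n d : ℕ} (G : Finset (Finset (Fin n))) :
    Matrix.det ((lapMat n d G).map Polynomial.C +
        (Polynomial.X : Polynomial ℤ) • (1 : Matrix _ _ (Polynomial ℤ))) =
      ∑ R ∈ (faces G (d - 1)).powerset, Polynomial.C (Matrix.det (Matrix.of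
        fun i j : (faces G (d - 1) \ R : Finset (Finset (Fin n))) =>
          ∑ f ∈ faces G d, incEntry i.1 f * incEntry j.1 f)) * Polynomial.X ^ R.card := by
  rw [aux_minors]
  symm
  refine Finset.sum_bij' (fun R _ => Finset.univ.filter (fun x : faces G (d - 1) => x.1 ∉ R))
    (fun s _ => sᶜ.map (Function.Embedding.subtype _)) ?_ ?_ ?_ ?_ ?_
  · intro R _; exact Finset.mem_univ _
  · intro s _
    rw [Finset.mem_powerset]
    intro x hx
    obtain ⟨y, _, rfl⟩ := Finset.mem_map.1 hx
    exact y.2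
  · intro R hR
    rw [Finset.mem_powerset] at hR
    ext x
    simp only [Finset.mem_map, Finset.mem_compl, Finset.mem_filter, Finset.mem_univ, true_and,
      not_not, Function.Embedding.subtype_apply]
    constructor
    · rintro ⟨y, hy, rfl⟩; exact hy
    · intro hx; exact ⟨⟨x, hR hx⟩, hx, rfl⟩
  · intro s _
    ext x
    simp
  · intro R hR
    rw [Finset.mem_powerset] at hR
    congr 1
    · congr 1
      let e : (faces G (d - 1) \ R : Finset (Finset (Fin n))) ≃
          (Finset.univ.filter (fun x : faces G (d - 1) => x.1 ∉ R)) :=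
        ⟨fun r => ⟨⟨r.1, (Finset.mem_sdiff.1 r.2).1⟩, by simpa using (Finset.mem_sdiff.1 r.2).2⟩,
         fun r => ⟨r.1.1, Finset.mem_sdiff.2 ⟨r.1.2, by simpa using r.2⟩⟩,
         fun r => rfl, fun r => rfl⟩
      rw [← Matrix.det_submatrix_equiv_self e]
      congr 1
      ext i j
      simp only [Matrix.of_apply, Matrix.submatrix_apply, lapMat, Matrix.mul_apply,
        Matrix.transpose_apply, incMatrix]
      rw [← Finset.sum_coe_sort (faces G d)]
      rfl
    · congr 1
      rw [← Finset.card_map (Function.Embedding.subtype _)]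
      congr 1
      ext x
      simp only [Finset.mem_map, Finset.mem_compl, Finset.mem_filter, Finset.mem_univ, true_and,
        not_not, Function.Embedding.subtype_apply]
      constructor
      · intro hx; exact ⟨⟨x, hR hx⟩, hx, rfl⟩
      · rintro ⟨y, hy, rfl⟩; exact hy

open scoped Classical in
/-- As an identity in `ℤ[x]`, the sum over all quadruples
`(F,R,φ,φ')`, with `(F,R)` a rooted forest of `G` and `φ, φ'` fitting orientations of
`(F,R)`, of `(−1)^{s(φ,φ')}·x^{|R|}` equals `det(L_G + x·Id)`, where `s(φ,φ')` is the
number of oriented strips of `(φ,φ')`, i.e. of orbits `C` of `θ = φ⁻¹∘φ'` with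
`|C| ≥ 2` (the cycles of `θ`) such that `Π_{r∈C} ∂[r,φ(r)]·∂[r,φ'(r)] = (−1)^{|C|}`. -/
theorem sum_neg_one_pow_orientedStrips_eq_det_lap_add_X
    (n d : ℕ) (hn : 1 ≤ n) (hd : 1 ≤ d)
    (G : Finset (Finset (Fin n))) (hG : IsComplex n d G) :
    (∑ F ∈ (faces G d).powerset, ∑ R ∈ (faces G (d - 1)).powerset,
        if IsRootedForest n d G F R then
          ∑ φ ∈ Finset.univ.filter
              (fun φ : (faces G (d - 1) \ R : Finset (Finset (Fin n))) ≃ F =>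
                ∀ r, r.1 ⊆ (φ r).1),
            ∑ φ' ∈ Finset.univ.filter
                (fun φ' : (faces G (d - 1) \ R : Finset (Finset (Fin n))) ≃ F =>
                  ∀ r, r.1 ⊆ (φ' r).1),
              Polynomial.C
                  ((-1 : ℤ) ^
                    ((Equiv.Perm.cycleFactorsFinset (φ'.trans φ.symm) |>.filter fun c =>
                        (∏ r ∈ c.support,
                          incEntry r.1 (φ r).1 * incEntry r.1 (φ' r).1) =
                          (-1 : ℤ) ^ c.support.card).card)) *
                Polynomial.X ^ R.card
        else 0) =
      Matrix.det ((lapMat n d G).map Polynomial.C +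
        (Polynomial.X : Polynomial ℤ) • (1 : Matrix _ _ (Polynomial ℤ))) := by
  rw [aux_det_lap, Finset.sum_comm]
  refine Finset.sum_congr rfl fun R hR => ?_
  rw [Finset.mem_powerset] at hR
  rw [aux_cauchyBinet (faces G d)
    (fun (i : (faces G (d - 1) \ R : Finset (Finset (Fin n)))) f => incEntry i.1 f),
    map_sum, Finset.sum_mul]
  refine Finset.sum_congr rfl fun F hF => ?_
  rw [Finset.mem_powerset] at hF
  split_ifs with hroot
  · simp_rw [← Finset.sum_mul, ← map_sum]
    congr 2
    rw [Finset.sum_filter]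
    refine Finset.sum_congr rfl fun φ _ => ?_
    have hzero : ∀ ψ : (faces G (d - 1) \ R : Finset (Finset (Fin n))) ≃ F,
        ¬ (∀ r, r.1 ⊆ (ψ r).1) → ∏ r, incEntry r.1 (ψ r).1 = 0 := by
      intro ψ h
      push Not at h
      obtain ⟨r, hr⟩ := h
      exact Finset.prod_eq_zero (Finset.mem_univ r) (by rw [incEntry, if_neg hr])
    split_ifs with hφ
    · rw [aux_det_expand (fun (i : (faces G (d - 1) \ R : Finset (Finset (Fin n)))) (f : F) =>
        incEntry i.1 f.1) φ, Finset.mul_sum, Finset.sum_filter]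
      refine Finset.sum_congr rfl fun φ' _ => ?_
      split_ifs with hφ'
      · have := aux_strips (φ'.trans φ.symm)
          (fun r => incEntry r.1 (φ r).1 * incEntry r.1 (φ' r).1) ?_ ?_
        · convert this using 1
          rw [Finset.prod_mul_distrib]; ring
        · intro r
          rcases aux_incEntry _ _ (hφ r) with h | h <;>
            rcases aux_incEntry _ _ (hφ' r) with h' | h' <;> simp [h, h']
        · intro r hr
          have : φ' r = φ r := by
            rw [Equiv.trans_apply, Equiv.symm_apply_eq] at hr; exact hr
          rw [this]
          rcases aux_incEntry _ _ (hφ r) with h | h <;> simp [h]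
      · rw [hzero φ' hφ']; ring
    · rw [hzero φ hφ, zero_mul]
  · rw [Finset.sum_eq_zero, map_zero, zero_mul]
    intro φ _
    by_contra hne
    exact hroot (aux_rooted_s12 hF hR φ (right_ne_zero_of_mul hne))
end

section
/- Let 1 ≤ d ≤ n − 1 and let K_n^d be the complete d-dimensional simplicial complex on Fin n, i.e. the family of all subsets of Fin n of cardinality at most d+1, with incidence matrix ∂. Then, as an identity in ℤ[x], Σ over all rooted forests (F,R) of K_n^d of det(∂_{R̄,F})² · x^{|R|} = x^{C(n−1, d−1)} · (x + n)^{C(n−1, d)}, where C(a,b) denotes the binomial coefficient. -/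
open Finset

/-- The complete `d`-dimensional simplicial complex on `Fin n`: all subsets of
cardinality at most `d+1`. -/
def completeComplex (n d : ℕ) : Finset (Finset (Fin n)) :=
  Finset.univ.filter fun f => f.card ≤ d + 1


def sg {n : ℕ} (v : Fin n) (s : Finset (Fin n)) : ℤ := (-1) ^ (s.filter fun w => w < v).card

lemma sg_sq {n : ℕ} (v : Fin n) (s : Finset (Fin n)) : sg v s * sg v s = 1 := by
  unfold sg
  rw [← mul_pow]; simp

lemma sg_insert {n : ℕ} (v a : Fin n) (s : Finset (Fin n)) (ha : a ∉ s) :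
    sg v (insert a s) = if a < v then - sg v s else sg v s := by
  unfold sg
  rw [Finset.filter_insert]
  split_ifs with h
  · rw [Finset.card_insert_of_notMem (by simp [ha]), pow_succ]; ring
  · rfl

lemma sg_swap {n : ℕ} (a b : Fin n) (s : Finset (Fin n)) (ha : a ∉ s) (hb : b ∉ s) (hab : a ≠ b) :
    sg b (insert a s) * sg a (insert b s) = - (sg a s * sg b s) := by
  rw [sg_insert _ _ _ ha, sg_insert _ _ _ hb]
  rcases lt_or_gt_of_ne hab with h | h
  · simp [h, h.not_gt, mul_comm]
  · simp [h, h.not_gt, mul_comm]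

lemma sg_swap' {n : ℕ} (a b : Fin n) (s : Finset (Fin n)) (ha : a ∉ s) (hb : b ∉ s) (hab : a ≠ b) :
    sg a s * sg b (insert a s) + sg b s * sg a (insert b s) = 0 := by
  rw [sg_insert _ _ _ ha, sg_insert _ _ _ hb]
  rcases lt_or_gt_of_ne hab with h | h
  · simp [h, h.not_gt, mul_comm]
  · simp [h, h.not_gt, mul_comm]

lemma inc_insert {n : ℕ} (v : Fin n) (s : Finset (Fin n)) (hv : v ∉ s) :
    incEntry s (insert v s) = sg v s := by
  unfold incEntry sg
  rw [if_pos (Finset.subset_insert _ _)]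
  have : insert v s \ s = {v} := by
    ext x; simp only [mem_sdiff, mem_insert, mem_singleton]; grind
  rw [this, Finset.sum_singleton, Finset.filter_insert]
  simp

lemma inc_not {n : ℕ} {r f : Finset (Fin n)} (h : ¬ r ⊆ f) : incEntry r f = 0 := by
  unfold incEntry; rw [if_neg h]

/-- sums over supersets -/
lemma sum_up {n k : ℕ} (r : Finset (Fin n)) (hr : r.card = k) (g : Finset (Fin n) → ℤ) :
    ∑ f ∈ powersetCard (k+1) (univ : Finset (Fin n)), incEntry r f * g f
      = ∑ v ∈ rᶜ, sg v r * g (insert v r) := by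
  have h1 : ∑ f ∈ (rᶜ).image (fun v => insert v r), incEntry r f * g f
      = ∑ f ∈ powersetCard (k+1) (univ : Finset (Fin n)), incEntry r f * g f := by
    apply Finset.sum_subset
    · intro f hf
      simp only [mem_image, mem_compl] at hf
      obtain ⟨v, hv, rfl⟩ := hf
      simp [mem_powersetCard, card_insert_of_notMem hv, hr]
    · intro f hf hf'
      rw [mem_powersetCard] at hf
      by_cases hs : r ⊆ f
      · exfalso; apply hf'
        have hc : (f \ r).card = 1 := by rw [card_sdiff_of_subset hs]; omega
        obtain ⟨v, hv⟩ := Finset.card_eq_one.1 hc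
        have hv' : v ∈ f \ r := by simp [hv]
        rw [mem_sdiff] at hv'
        simp only [mem_image, mem_compl]
        refine ⟨v, hv'.2, ?_⟩
        rw [← Finset.sdiff_union_of_subset hs, hv]; rfl
      · rw [inc_not hs]; simp
  rw [← h1, Finset.sum_image]
  · apply Finset.sum_congr rfl
    intro v hv
    rw [inc_insert _ _ (by simpa using hv)]
  · intro a ha b hb hab
    simp only [coe_compl, Set.mem_compl_iff, mem_coe] at ha hb
    have : a ∈ insert b r := by
      have h2 : a ∈ insert a r := mem_insert_self _ _
      rw [show insert a r = insert b r from hab] at h2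
      exact h2
    grind

lemma sum_down {n k : ℕ} (r : Finset (Fin n)) (hr : r.card = k + 1) (g : Finset (Fin n) → ℤ) :
    ∑ o ∈ powersetCard k (univ : Finset (Fin n)), incEntry o r * g o
      = ∑ v ∈ r, sg v (r.erase v) * g (r.erase v) := by
  have h1 : ∑ f ∈ r.image (fun v => r.erase v), incEntry f r * g f
      = ∑ f ∈ powersetCard k (univ : Finset (Fin n)), incEntry f r * g f := by
    apply Finset.sum_subset
    · intro f hf
      simp only [mem_image] at hf
      obtain ⟨v, hv, rfl⟩ := hf
      simp [mem_powersetCard, card_erase_of_mem hv, hr]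
    · intro f hf hf'
      rw [mem_powersetCard] at hf
      by_cases hs : f ⊆ r
      · exfalso; apply hf'
        have hc : (r \ f).card = 1 := by rw [card_sdiff_of_subset hs]; omega
        obtain ⟨v, hv⟩ := Finset.card_eq_one.1 hc
        have hv' : v ∈ r \ f := by simp [hv]
        rw [mem_sdiff] at hv'
        simp only [mem_image]
        refine ⟨v, hv'.1, ?_⟩
        rw [← Finset.sdiff_singleton_eq_erase, ← hv, Finset.sdiff_sdiff_eq_self hs]
      · rw [inc_not hs]; simp
  rw [← h1, Finset.sum_image]
  · apply Finset.sum_congr rfl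
    intro v hv
    have := inc_insert v (r.erase v) (by simp)
    rw [Finset.insert_erase hv] at this
    rw [this]
  · intro a ha b hb hab
    by_contra hne
    have : a ∈ r.erase b := by simp [hne]; exact ha
    rw [← (show r.erase a = r.erase b from hab)] at this
    simp at this

lemma updown {n k : ℕ} (r r' : Finset (Fin n)) (hr : r.card = k + 1) (hr' : r'.card = k + 1) :
    ∑ f ∈ powersetCard (k+2) (univ : Finset (Fin n)), incEntry r f * incEntry r' f
    + ∑ o ∈ powersetCard k (univ : Finset (Fin n)), incEntry o r * incEntry o r'
      = if r = r' then (n : ℤ) else 0 := by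
  rw [sum_up r hr, sum_down r hr]
  split_ifs with h
  · subst h
    have e1 : ∑ v ∈ rᶜ, sg v r * incEntry r (insert v r) = ∑ v ∈ rᶜ, 1 := by
      apply Finset.sum_congr rfl
      intro v hv
      rw [inc_insert _ _ (by simpa using hv), sg_sq]
    have e2 : ∑ v ∈ r, sg v (r.erase v) * incEntry (r.erase v) r = ∑ v ∈ r, 1 := by
      apply Finset.sum_congr rfl
      intro v hv
      have := inc_insert v (r.erase v) (by simp)
      rw [Finset.insert_erase hv] at this
      rw [this, sg_sq]
    rw [e1, e2, Finset.sum_compl_add_sum]; simp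
  · by_cases hc : (r \ r').card = 1
    · have hc' : (r' \ r).card = 1 := by
        rw [← hc]; exact Finset.card_sdiff_comm (by omega)
      obtain ⟨a, ha⟩ := Finset.card_eq_one.1 hc
      obtain ⟨b, hb⟩ := Finset.card_eq_one.1 hc'
      have ea : r = insert a (r ∩ r') := by
        rw [← Finset.sdiff_union_inter r r', ha]; ext; simp; grind
      have eb : r' = insert b (r ∩ r') := by
        rw [inter_comm, ← Finset.sdiff_union_inter r' r, hb]; ext; simp; grind
      have ha' : a ∈ r \ r' := by simp [ha]
      have hb' : b ∈ r' \ r := by simp [hb]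
      rw [mem_sdiff] at ha' hb'
      generalize hs : r ∩ r' = s at ea eb
      have has : a ∉ s := by rw [← hs]; simp [ha'.2]
      have hbs : b ∉ s := by rw [← hs]; simp [hb'.2]
      have hab : a ≠ b := by rintro rfl; exact ha'.2 hb'.1
      rw [Finset.sum_eq_single b, Finset.sum_eq_single a]
      · have e1 : r.erase a = s := by rw [ea, erase_insert has]
        have e2 : insert b r = insert a r' := by rw [ea, eb, insert_comm]
        rw [e1, e2, inc_insert _ _ ha'.2]
        rw [eb, inc_insert _ _ hbs, ea, sg_swap a b s has hbs hab]; ring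
      · intro v hv hva
        rw [inc_not, mul_zero]
        intro hsub
        exact ha'.2 (hsub (by simp [Ne.symm hva, ha'.1]))
      · intro h; exact absurd ha'.1 h
      · intro v hv hvb
        rw [inc_not, mul_zero]
        intro hsub
        have := hsub hb'.1
        simp [Ne.symm hvb, hb'.2] at this
      · intro h; simp [hb'.2] at h
    · have hc' : (r' \ r).card ≠ 1 := by
        rw [Finset.card_sdiff_comm (by omega)]; exact hc
      rw [Finset.sum_eq_zero, Finset.sum_eq_zero, add_zero]
      · intro v hv
        rw [inc_not, mul_zero]
        intro hsub
        apply hc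
        rw [Finset.card_eq_one]
        refine ⟨v, ?_⟩
        have h0 : (r \ r').Nonempty := by
          rw [Finset.sdiff_nonempty]; intro hss
          exact h (Finset.eq_of_subset_of_card_le hss (by omega))
        refine (Finset.subset_singleton_iff.1 ?_).resolve_left h0.ne_empty
        intro x hx
        rw [mem_sdiff] at hx
        by_contra hxv
        exact hx.2 (hsub (by simp at hxv; simp [hxv, hx.1]))
      · intro v hv
        rw [inc_not, mul_zero]
        intro hsub
        apply hc'
        rw [Finset.card_eq_one]
        refine ⟨v, ?_⟩
        have h0 : (r' \ r).Nonempty := by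
          rw [Finset.sdiff_nonempty]; intro hss
          exact h (Finset.eq_of_subset_of_card_le hss (by omega)).symm
        refine (Finset.subset_singleton_iff.1 ?_).resolve_left h0.ne_empty
        intro x hx
        rw [mem_sdiff] at hx
        have := hsub hx.1
        simp [hx.2] at this
        simp [this]

lemma bdbd {n k : ℕ} (o f : Finset (Fin n)) (ho : o.card = k) (hf : f.card = k + 2) :
    ∑ r ∈ powersetCard (k+1) (univ : Finset (Fin n)), incEntry o r * incEntry r f = 0 := by
  rw [sum_up o ho]
  by_cases hs : o ⊆ f
  · have hc : (f \ o).card = 2 := by rw [card_sdiff_of_subset hs]; omega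
    obtain ⟨a, b, hab, hfo⟩ := Finset.card_eq_two.1 hc
    have hf' : f = insert a (insert b o) := by
      rw [← Finset.sdiff_union_of_subset hs, hfo]; ext; simp
    have ha : a ∉ o := by
      have : a ∈ f \ o := by simp [hfo]
      exact (mem_sdiff.1 this).2
    have hb : b ∉ o := by
      have : b ∈ f \ o := by simp [hfo]
      exact (mem_sdiff.1 this).2
    have hsub : ({a, b} : Finset (Fin n)) ⊆ oᶜ := by
      intro x hx; simp at hx; rcases hx with rfl | rfl <;> simpa
    rw [← Finset.sum_subset hsub, Finset.sum_pair hab]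
    · have e1 : incEntry (insert a o) f = sg b (insert a o) := by
        rw [hf', insert_comm, inc_insert]; simp [hab.symm, hb]
      have e2 : incEntry (insert b o) f = sg a (insert b o) := by
        rw [hf', inc_insert]; simp [hab, ha]
      rw [e1, e2]; exact sg_swap' a b o ha hb hab
    · intro x hx hx'
      rw [inc_not, mul_zero]
      intro h
      apply hx'
      rw [← hfo, mem_sdiff]
      exact ⟨h (mem_insert_self _ _), by simpa using hx⟩
  · apply Finset.sum_eq_zero
    intro v _
    rw [inc_not, mul_zero]
    intro h; exact hs ((subset_insert _ _).trans h)

lemma diag_sum {n k : ℕ} (r : Finset (Fin n)) (hr : r.card = k) :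
    ∑ f ∈ powersetCard (k+1) (univ : Finset (Fin n)), incEntry r f * incEntry r f
      = ((n - k : ℕ) : ℤ) := by
  rw [sum_up r hr]
  have e1 : ∑ v ∈ rᶜ, sg v r * incEntry r (insert v r) = ∑ v ∈ rᶜ, 1 := by
    apply Finset.sum_congr rfl
    intro v hv
    rw [inc_insert _ _ (by simpa using hv), sg_sq]
  rw [e1]; simp [card_compl, hr]

open Polynomial in
/-- Characteristic polynomial of a symmetric matrix with `L^2 = n L`. -/
lemma det_proj {p : Type*} [Fintype p] [DecidableEq p] (n a b : ℕ) (hn : 0 < n)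
    (M : Matrix p p ℤ) (hs : M.transpose = M) (hM : M * M = (n : ℤ) • M)
    (htr : M.trace = n * b) (hcard : Fintype.card p = a + b) :
    Matrix.det ((X : ℤ[X]) • (1 : Matrix p p ℤ[X]) + M.map C) = X ^ a * (X + C (n : ℤ)) ^ b := by
  have hinj : Function.Injective (Polynomial.map (Int.castRingHom ℝ)) :=
    Polynomial.map_injective _ (RingHom.injective_int _)
  apply hinj
  let N : Matrix p p ℝ := -(M.map (Int.castRingHom ℝ))
  have hN : N.IsHermitian := by
    ext i j
    have := congrFun (congrFun hs i) j
    simp only [Matrix.transpose_apply] at this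
    simp [N, this]
  have hNN : N * N = -((n : ℝ) • N) := by
    have := congrArg (fun A : Matrix p p ℤ => A.map (Int.castRingHom ℝ)) hM
    simp only [Matrix.map_mul] at this
    simp only [N, neg_mul_neg, this]
    ext i j
    simp only [Matrix.map_apply, Matrix.smul_apply, Matrix.neg_apply, smul_eq_mul]
    simp
  have hdet : Polynomial.map (Int.castRingHom ℝ)
      (Matrix.det ((X : ℤ[X]) • (1 : Matrix p p ℤ[X]) + M.map C)) = N.charpoly := by
    rw [← Polynomial.coe_mapRingHom, RingHom.map_det, Matrix.charpoly]
    congr 1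
    ext1 i j
    by_cases hij : i = j
    · subst hij; simp [N]
    · simp [N, hij, Matrix.charmatrix_apply_ne]
  rw [hdet, hN.charpoly_eq]
  have hev : ∀ i, hN.eigenvalues i = 0 ∨ hN.eigenvalues i = -(n : ℝ) := by
    intro i
    have h1 := hN.mulVec_eigenvectorBasis i
    set v := (hN.eigenvectorBasis i).ofLp with hv
    have hv0 : v ≠ 0 := (WithLp.ofLp_eq_zero 2).ne.2 <| hN.eigenvectorBasis.orthonormal.ne_zero i
    set μ := hN.eigenvalues i
    have h2 : (N * N).mulVec v = (μ * μ) • v := by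
      rw [← Matrix.mulVec_mulVec, h1, Matrix.mulVec_smul, h1, smul_smul]
    rw [hNN, Matrix.neg_mulVec, Matrix.smul_mulVec, h1, smul_smul, ← neg_smul] at h2
    have h3 := smul_left_injective ℝ hv0 h2
    have : μ * (μ + n) = 0 := by linarith
    rcases mul_eq_zero.1 this with h | h
    · exact Or.inl h
    · exact Or.inr (by linarith)
  have hn' : (n : ℝ) ≠ 0 := by positivity
  set Z := (univ : Finset p).filter (fun i => hN.eigenvalues i = 0) with hZ
  have hsum : (Zᶜ.card : ℝ) = b := by
    have h1 := hN.trace_eq_sum_eigenvalues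
    have h2 : ∑ i, hN.eigenvalues i = ∑ i ∈ Zᶜ, (-(n:ℝ)) := by
      rw [← Finset.sum_add_sum_compl Z, Finset.sum_eq_zero (s := Z), zero_add]
      · apply Finset.sum_congr rfl
        intro i hi
        exact (hev i).resolve_left (by simpa [hZ] using hi)
      · intro i hi; simpa [hZ] using hi
    have h3 : N.trace = -((n : ℝ) * b) := by
      have : N.trace = - ((M.trace : ℤ) : ℝ) := by
        simp [N, Matrix.trace, Matrix.map_apply]
      rw [this, htr]; simp
    simp only [RCLike.ofReal_real_eq_id, id] at h1
    rw [h3, h2, Finset.sum_const, nsmul_eq_mul] at h1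
    have : (n : ℝ) * b = n * Zᶜ.card := by linarith
    exact (mul_left_cancel₀ hn' this).symm
  have hb : Zᶜ.card = b := by exact_mod_cast hsum
  have ha : Z.card = a := by
    have := Finset.card_add_card_compl Z
    omega
  rw [← Finset.prod_mul_prod_compl Z]
  have e1 : ∏ i ∈ Z, (X - C ((hN.eigenvalues i : ℝ))) = X ^ a := by
    rw [← ha]; apply Finset.prod_eq_pow_card
    intro i hi
    have : hN.eigenvalues i = 0 := by simpa [hZ] using hi
    simp [this]
  have e2 : ∏ i ∈ Zᶜ, (X - C ((hN.eigenvalues i : ℝ))) = (X + C (n : ℝ)) ^ b := by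
    rw [← hb]; apply Finset.prod_eq_pow_card
    intro i hi
    have : hN.eigenvalues i = -n := (hev i).resolve_left (by simpa [hZ] using hi)
    simp [this]
  simp only [RCLike.ofReal_real_eq_id, id]
  rw [e1, e2]; simp

open Polynomial in
lemma det_complete (n d : ℕ) (hd : 1 ≤ d) (hdn : d ≤ n - 1) (P Q : Finset (Finset (Fin n)))
    (hP : P = powersetCard d univ) (hQ : Q = powersetCard (d+1) univ)
    (A : Matrix P Q ℤ) (hA : A = Matrix.of fun r f => incEntry r.1 f.1) :
    Matrix.det ((X : ℤ[X]) • (1 : Matrix P P ℤ[X]) + (A * A.transpose).map C)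
      = X ^ Nat.choose (n - 1) (d - 1) * (X + C (n : ℤ)) ^ Nat.choose (n - 1) d := by
  obtain ⟨k, rfl⟩ : ∃ k, d = k + 1 := ⟨d - 1, by omega⟩
  obtain ⟨m, rfl⟩ : ∃ m, n = m + 1 := ⟨n - 1, by omega⟩
  have cP : ∀ r : P, r.1.card = k + 1 := by
    intro r; exact (mem_powersetCard.1 (hP.subset r.2)).2
  have cQ : ∀ r : Q, r.1.card = k + 2 := by
    intro r; exact (mem_powersetCard.1 (hQ.subset r.2)).2
  let O := powersetCard k (univ : Finset (Fin (m+1)))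
  let D : Matrix O P ℤ := Matrix.of fun r f => incEntry r.1 f.1
  have hDA : D * A = 0 := by
    ext o f
    simp only [Matrix.mul_apply, D, hA, Matrix.of_apply, Matrix.zero_apply]
    rw [Finset.sum_coe_sort P (fun r => incEntry o.1 r * incEntry r f.1), hP]
    exact bdbd o.1 f.1 (mem_powersetCard.1 o.2).2 (cQ f)
  have hsum : A * A.transpose = ((m + 1 : ℕ) : ℤ) • (1 : Matrix P P ℤ) - D.transpose * D := by
    rw [eq_sub_iff_add_eq]
    ext r r'
    simp only [Matrix.mul_apply, D, hA, Matrix.of_apply, Matrix.transpose_apply, Matrix.add_apply]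
    rw [Finset.sum_coe_sort Q (fun f => incEntry r.1 f * incEntry r'.1 f),
      Finset.sum_coe_sort O (fun f => incEntry f r.1 * incEntry f r'.1), hQ, updown _ _ (cP r) (cP r')]
    simp only [Matrix.smul_apply, Matrix.one_apply, Subtype.ext_iff, smul_eq_mul, mul_ite, mul_one,
      mul_zero]
  have hAD : A.transpose * D.transpose = 0 := by
    rw [← Matrix.transpose_mul, hDA, Matrix.transpose_zero]
  apply det_proj
  · omega
  · simp [Matrix.transpose_mul]
  · nth_rewrite 1 [hsum]
    rw [Matrix.sub_mul, Matrix.mul_assoc D.transpose, ← Matrix.mul_assoc D, hDA]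
    rw [Matrix.zero_mul, Matrix.mul_zero, sub_zero, Matrix.smul_mul, Matrix.one_mul]
  · simp only [Matrix.trace, Matrix.diag_apply, Matrix.mul_apply, hA, Matrix.of_apply,
      Matrix.transpose_apply]
    have : ∀ r : P, ∑ f : Q, incEntry r.1 f.1 * incEntry r.1 f.1 = ((m + 1 - (k+1) : ℕ) : ℤ) := by
      intro r
      rw [Finset.sum_coe_sort Q (fun f => incEntry r.1 f * incEntry r.1 f), hQ, diag_sum _ (cP r)]
    rw [Finset.sum_congr rfl (fun r _ => this r)]
    simp only [Finset.sum_const, card_univ, Fintype.card_coe, hP, card_powersetCard, Fintype.card_fin, nsmul_eq_mul]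
    have := Nat.choose_mul_succ_eq m (k+1)
    simp only [Nat.add_sub_cancel]
    rw [mul_comm ((m+1 : ℕ) : ℤ)]
    exact_mod_cast this.symm
  · simp [hP, Nat.choose_succ_succ]

lemma det_piecewise_diag {m R : Type*} [Fintype m] [DecidableEq m] [CommRing R]
    (M : Matrix m m R) (D : m → R) (s : Finset m) :
    Matrix.det (Matrix.of (s.piecewise (fun i => M i) (fun i => Matrix.diagonal D i))) =
      (∏ i ∈ sᶜ, D i) * (M.submatrix (↑) (↑) : Matrix s s R).det := by
  let e := Equiv.sumCompl (fun x => x ∈ s)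
  rw [← Matrix.det_submatrix_equiv_self e]
  have h_blocks : (Matrix.of (s.piecewise (fun i => M i) (fun i => Matrix.diagonal D i))).submatrix
        e e = Matrix.fromBlocks
        (M.submatrix Subtype.val Subtype.val)
        (M.submatrix Subtype.val Subtype.val) 0 (Matrix.diagonal fun i => D i.1) := by
    ext (i | i) (j | j) <;> dsimp [e]
    · simp only [Finset.piecewise, if_pos i.prop]
    · simp only [Finset.piecewise, if_pos i.prop]
    · simp only [Finset.piecewise, if_neg i.prop]
      exact Matrix.diagonal_apply_ne _ (fun h => i.prop (h ▸ j.prop))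
    · simp only [Finset.piecewise, if_neg i.prop, Matrix.diagonal_apply, Subtype.ext_iff]
  rw [h_blocks, Matrix.det_fromBlocks_zero₂₁, Matrix.det_diagonal, mul_comm]
  congr 1
  rw [← Finset.prod_subtype sᶜ (by simp) D]

lemma det_diag_add {m R : Type*} [Fintype m] [DecidableEq m] [CommRing R]
    (M : Matrix m m R) (D : m → R) :
    Matrix.det (M + Matrix.diagonal D) =
      ∑ s : Finset m, (∏ i ∈ sᶜ, D i) * (M.submatrix (↑) (↑) : Matrix s s R).det := by
  have := (Matrix.detRowAlternating (n := m) (R := R)).map_add_univ (fun i => M i)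
    (fun i => Matrix.diagonal D i)
  refine Eq.trans this ?_
  exact Finset.sum_congr rfl fun s _ => det_piecewise_diag M D s

lemma det_anti_zero {p q R : Type*} [Fintype p] [DecidableEq p] [Fintype q] [DecidableEq q]
    [CommRing R] (B : Matrix p q R) (C : Matrix q p R) (h : Fintype.card p ≠ Fintype.card q) :
    Matrix.det (Matrix.fromBlocks 0 B C 0) = 0 := by
  rw [Matrix.det_apply]
  apply Finset.sum_eq_zero
  intro σ _
  suffices ∃ i, (Matrix.fromBlocks 0 B C 0) (σ i) i = 0 by
    obtain ⟨i, hi⟩ := this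
    have h0 : ∏ i, (Matrix.fromBlocks 0 B C 0) (σ i) i = 0 :=
      Finset.prod_eq_zero (f := fun i => (Matrix.fromBlocks 0 B C 0) (σ i) i) (mem_univ i) hi
    rw [h0, smul_zero]
  by_contra hcon
  push Not at hcon
  have h1 : ∀ i : p, ∃ j : q, σ (Sum.inl i) = Sum.inr j := by
    intro i
    rcases hσ : σ (Sum.inl i) with j | j
    · exact absurd (by rw [hσ]; rfl) (hcon (Sum.inl i))
    · exact ⟨j, rfl⟩
  have h2 : ∀ i : q, ∃ j : p, σ (Sum.inr i) = Sum.inl j := by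
    intro i
    rcases hσ : σ (Sum.inr i) with j | j
    · exact ⟨j, rfl⟩
    · exact absurd (by rw [hσ]; rfl) (hcon (Sum.inr i))
  choose f hf using h1
  choose g hg using h2
  apply h
  apply le_antisymm
  · apply Fintype.card_le_of_injective f
    intro a b hab
    have : σ (Sum.inl a) = σ (Sum.inl b) := by rw [hf, hf, hab]
    simpa using this
  · apply Fintype.card_le_of_injective g
    intro a b hab
    have : σ (Sum.inr a) = σ (Sum.inr b) := by rw [hg, hg, hab]
    simpa using this

lemma det_anti_sq {p q R : Type*} [Fintype p] [DecidableEq p] [Fintype q] [DecidableEq q]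
    [CommRing R] (B : Matrix p q R) (e : p ≃ q) :
    Matrix.det (Matrix.fromBlocks 0 B (-B.transpose) 0) = (B.submatrix id e).det ^ 2 := by
  rw [← Matrix.det_submatrix_equiv_self (Equiv.sumCongr (Equiv.refl p) e)]
  have : (Matrix.fromBlocks 0 B (-B.transpose) 0).submatrix (Equiv.sumCongr (Equiv.refl p) e)
      (Equiv.sumCongr (Equiv.refl p) e) = Matrix.fromBlocks 0 (B.submatrix id e)
        (-(B.submatrix id e).transpose) 0 := by
    ext (i | i) (j | j) <;> simp
  rw [this]
  generalize B.submatrix id e = A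
  have h : (Matrix.fromBlocks 0 A (-A.transpose) 0 : Matrix (p ⊕ p) (p ⊕ p) R) =
      Matrix.fromBlocks A 0 0 (A.transpose) * Matrix.fromBlocks 0 1 (-1) 0 := by
    simp [Matrix.fromBlocks_multiply]
  have h1 : Matrix.det (Matrix.fromBlocks 0 1 (-1) 0 : Matrix (p ⊕ p) (p ⊕ p) R) = 1 := by
    have : (Matrix.fromBlocks 0 1 (-1) 0 : Matrix (p ⊕ p) (p ⊕ p) R) =
      Matrix.fromBlocks 1 1 0 1 * Matrix.fromBlocks 1 0 (-1) 1 * Matrix.fromBlocks 1 1 0 1 := by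
      simp [Matrix.fromBlocks_multiply]
    rw [this]
    simp [Matrix.det_mul]
  rw [h, Matrix.det_mul, h1, Matrix.det_fromBlocks_zero₂₁, Matrix.det_transpose]; ring

open Polynomial in
lemma det_schur {P Q : Type*} [Fintype P] [DecidableEq P] [Fintype Q] [DecidableEq Q]
    (A : Matrix P Q ℤ) :
    Matrix.det ((X : ℤ[X]) • (1 : Matrix P P ℤ[X]) + (A * A.transpose).map C) =
    Matrix.det ((Matrix.fromBlocks 0 A (-A.transpose) 0).map C
      + Matrix.diagonal (Sum.elim (fun _ : P => (X : ℤ[X])) (fun _ : Q => 1))) := by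
  have : ((Matrix.fromBlocks 0 A (-A.transpose) 0).map C
      + Matrix.diagonal (Sum.elim (fun _ : P => (X : ℤ[X])) (fun _ : Q => 1)))
      = Matrix.fromBlocks ((X : ℤ[X]) • (1 : Matrix P P ℤ[X])) (A.map C) (-(A.transpose).map C) 1 := by
    ext1 (i | i) (j | j) <;> simp [Matrix.diagonal_apply, Matrix.one_apply]
  rw [this, Matrix.det_fromBlocks_one₂₂]
  congr 1
  rw [Matrix.map_mul]
  simp

open Polynomial in
/-- Expansion over pairs of subsets. -/
lemma det_expand {P Q : Type*} [Fintype P] [DecidableEq P] [Fintype Q] [DecidableEq Q]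
    (A : Matrix P Q ℤ) :
    Matrix.det ((X : ℤ[X]) • (1 : Matrix P P ℤ[X]) + (A * A.transpose).map C) =
    ∑ F : Finset Q, ∑ S : Finset P, X ^ (Sᶜ.card) *
      C (Matrix.det (Matrix.fromBlocks 0 (A.submatrix (↑) (↑) : Matrix S F ℤ)
        (-(A.submatrix (↑) (↑) : Matrix S F ℤ).transpose) 0)) := by
  rw [det_schur, det_diag_add, Finset.sum_comm, ← Finset.sum_product', Finset.univ_product_univ]
  refine Fintype.sum_equiv Finset.sumEquiv.toEquiv _ _ ?_
  intro s
  congr 1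
  · have : sᶜ = (s.toLeftᶜ).disjSum (s.toRightᶜ) := by
      ext (x | x) <;> simp
    rw [this, Finset.prod_disjSum]
    simp
  · have : ((Matrix.fromBlocks 0 A (-A.transpose) 0).map C : Matrix (P ⊕ Q) (P ⊕ Q) ℤ[X]).submatrix
        (Subtype.val : s → P ⊕ Q) (Subtype.val : s → P ⊕ Q) = ((Matrix.fromBlocks 0 A (-A.transpose) 0).submatrix
        (Subtype.val : s → P ⊕ Q) (Subtype.val : s → P ⊕ Q)).map C := rfl
    rw [this, ← RingHom.mapMatrix_apply, ← RingHom.map_det]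
    congr 1
    let f : s.toLeft ⊕ s.toRight → s := Sum.elim (fun i => ⟨Sum.inl i.1, Finset.mem_toLeft.1 i.2⟩)
      (fun i => ⟨Sum.inr i.1, Finset.mem_toRight.1 i.2⟩)
    have hf : Function.Bijective f := by
      constructor
      · rintro (⟨a, ha⟩ | ⟨a, ha⟩) (⟨b, hb⟩ | ⟨b, hb⟩) hab <;> simp_all [f]
      · rintro ⟨x | x, hx⟩
        · exact ⟨Sum.inl ⟨x, by simpa using hx⟩, rfl⟩
        · exact ⟨Sum.inr ⟨x, by simpa using hx⟩, rfl⟩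
    rw [← Matrix.det_submatrix_equiv_self (Equiv.ofBijective f hf)]
    congr 1
    ext (i | i) (j | j) <;> rfl

/-- If the square submatrix is nonsingular then the pair is a rooted forest. -/
lemma rooted_of_det {n d : ℕ} {G F R : Finset (Finset (Fin n))} (hF : F ⊆ faces G d)
    (hR : R ⊆ faces G (d - 1))
    (e : (faces G (d - 1) \ R : Finset (Finset (Fin n))) ≃ F)
    (hdet : (subMat n d G F R e).det ≠ 0) : IsRootedForest n d G F R := by
  let p := (faces G (d - 1) \ R : Finset (Finset (Fin n)))
  let N : Matrix p p ℚ := (subMat n d G F R e).map (Int.castRingHom ℚ)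
  have hN : N.det ≠ 0 := by
    have : N.det = (((subMat n d G F R e).det : ℤ) : ℚ) := by
      simp only [N]
      rw [← RingHom.mapMatrix_apply, ← RingHom.map_det]; rfl
    rw [this]; exact_mod_cast hdet
  have hU : IsUnit N := (Matrix.isUnit_iff_isUnit_det N).2 hN.isUnit
  have hcol := Matrix.linearIndependent_cols_iff_isUnit.2 hU
  have hrow := Matrix.linearIndependent_rows_iff_isUnit.2 hU
  have hrow' : LinearIndependent ℚ (fun r : p => fun f : F => (incEntry r.1 f.1 : ℚ)) := by
    let φ : (F → ℚ) →ₗ[ℚ] (p → ℚ) := LinearMap.funLeft ℚ ℚ e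
    apply LinearIndependent.of_comp φ
    exact hrow
  refine ⟨⟨hF, ?_⟩, hR, hrow', ?_⟩
  · let φ : (faces G (d - 1) → ℚ) →ₗ[ℚ] (p → ℚ) :=
      LinearMap.funLeft ℚ ℚ (fun r : p => ⟨r.1, (mem_sdiff.1 r.2).1⟩)
    apply LinearIndependent.of_comp φ
    have := hcol.comp e.symm e.symm.injective
    have heq : (φ ∘ fun f : F => fun r : faces G (d - 1) => (incEntry r.1 f.1 : ℚ))
        = N.col ∘ e.symm := by
      funext f r
      change (incEntry r.1 f.1 : ℚ) = ((incEntry r.1 (e (e.symm f)).1 : ℤ) : ℚ)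
      rw [Equiv.apply_symm_apply]
    rw [heq]
    exact this
  · have htop : Submodule.span ℚ (Set.range (fun r : p => fun f : F => (incEntry r.1 f.1 : ℚ))) = ⊤ :=
      hrow'.span_eq_top_of_card_eq_finrank' (by rw [Module.finrank_fintype_fun_eq_card]; exact Fintype.card_congr e)
    apply le_antisymm
    · apply Submodule.span_mono
      rintro _ ⟨r, rfl⟩
      exact ⟨⟨r.1, (mem_sdiff.1 r.2).1⟩, rfl⟩
    · rw [htop]; exact le_top

lemma block_reindex {S F p q : Type*} [Fintype S] [Fintype F] [Fintype p] [Fintype q]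
    [DecidableEq S] [DecidableEq F] [DecidableEq p] [DecidableEq q]
    (A : Matrix S F ℤ) (B : Matrix p q ℤ) (e₁ : p ≃ S) (e₂ : q ≃ F)
    (h : ∀ i j, A (e₁ i) (e₂ j) = B i j) :
    Matrix.det (Matrix.fromBlocks 0 A (-A.transpose) 0) =
      Matrix.det (Matrix.fromBlocks 0 B (-B.transpose) 0) := by
  rw [← Matrix.det_submatrix_equiv_self (Equiv.sumCongr e₁ e₂)]
  congr 1
  ext (i | i) (j | j) <;> simp [h]

open scoped Classical in
open Polynomial in
lemma sum_eq_det (n d : ℕ) (G : Finset (Finset (Fin n)))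
    (e : ∀ F R : Finset (Finset (Fin n)),
      IsRootedForest n d G F R → ((faces G (d - 1) \ R : Finset (Finset (Fin n))) ≃ F))
    (A : Matrix (faces G (d - 1)) (faces G d) ℤ)
    (hA : A = Matrix.of fun r f => incEntry r.1 f.1) :
    (∑ F ∈ (faces G d).powerset,
        ∑ R ∈ (faces G (d - 1)).powerset,
        if h : IsRootedForest n d G F R then
          (Polynomial.C ((Matrix.det (subMat n d G F R (e F R h))) ^ 2)) *
            Polynomial.X ^ R.card
        else 0) =
    Matrix.det ((X : ℤ[X]) • (1 : Matrix (faces G (d - 1)) (faces G (d - 1)) ℤ[X]) + (A * A.transpose).map C) := by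
  rw [det_expand]
  refine Finset.sum_bij' (fun F _ => F.subtype (· ∈ faces G d))
    (fun F' _ => F'.map (Function.Embedding.subtype _)) (fun _ _ => mem_univ _) ?_ ?_ ?_ ?_
  · intro F' _
    rw [mem_powerset]
    intro x hx
    simp only [mem_map, Function.Embedding.coe_subtype] at hx
    obtain ⟨y, _, rfl⟩ := hx
    exact y.2
  · intro F hF
    rw [mem_powerset] at hF
    exact Finset.subtype_map_of_mem (fun x hx => hF hx)
  · intro F' _
    ext x; simp
  intro F hF
  rw [mem_powerset] at hF
  refine Finset.sum_bij' (fun R _ => (univ : Finset (faces G (d-1))).filter (fun p => p.1 ∉ R))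
    (fun S _ => faces G (d-1) \ S.map (Function.Embedding.subtype _)) (fun _ _ => mem_univ _)
    ?_ ?_ ?_ ?_
  · intro S _
    rw [mem_powerset]
    exact sdiff_subset
  · intro R hR
    rw [mem_powerset] at hR
    ext x
    simp only [mem_sdiff, mem_map, mem_filter, mem_univ, true_and, Function.Embedding.coe_subtype]
    constructor
    · rintro ⟨h1, h2⟩
      by_contra hx
      exact h2 ⟨⟨x, h1⟩, hx, rfl⟩
    · intro h
      refine ⟨hR h, ?_⟩
      rintro ⟨y, hy, rfl⟩
      exact hy h
  · intro S _
    ext x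
    simp
  intro R hR
  rw [mem_powerset] at hR
  have hcard : ((univ : Finset (faces G (d-1))).filter (fun p => p.1 ∉ R))ᶜ.card = R.card := by
    have : ((univ : Finset (faces G (d-1))).filter (fun p => p.1 ∉ R))ᶜ
        = R.subtype (· ∈ faces G (d-1)) := by
      ext x; simp
    rw [this, Finset.card_subtype, Finset.filter_true_of_mem (fun x hx => hR hx)]
  rw [hcard]
  let B : Matrix (faces G (d - 1) \ R : Finset (Finset (Fin n))) F ℤ :=
    Matrix.of fun r f => incEntry r.1 f.1
  let e₁ : (faces G (d - 1) \ R : Finset (Finset (Fin n))) ≃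
      ((univ : Finset (faces G (d-1))).filter (fun p => p.1 ∉ R)) :=
    { toFun := fun x => ⟨⟨x.1, (mem_sdiff.1 x.2).1⟩, by simpa using (mem_sdiff.1 x.2).2⟩
      invFun := fun x => ⟨x.1.1, mem_sdiff.2 ⟨x.1.2, by simpa using x.2⟩⟩
      left_inv := fun x => rfl
      right_inv := fun x => rfl }
  let e₂ : F ≃ (F.subtype (· ∈ faces G d)) :=
    { toFun := fun x => ⟨⟨x.1, hF x.2⟩, Finset.mem_subtype.2 x.2⟩
      invFun := fun x => ⟨x.1.1, Finset.mem_subtype.1 x.2⟩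
      left_inv := fun x => rfl
      right_inv := fun x => rfl }
  rw [block_reindex _ B e₁ e₂ (by intro i j; rw [hA]; rfl)]
  split_ifs with h
  · rw [det_anti_sq B (e F R h), mul_comm]
    congr 3
  · symm
    by_cases hc : Fintype.card (faces G (d - 1) \ R : Finset (Finset (Fin n))) = Fintype.card F
    · let e' := Fintype.equivOfCardEq hc
      rw [det_anti_sq B e']
      have : (B.submatrix id e').det = 0 := by
        by_contra hne
        exact h (rooted_of_det hF hR e' hne)
      rw [this]; simp
    · rw [det_anti_zero B _ hc]; simp

open scoped Classical in
/-- For `1 ≤ d ≤ n − 1`, the generating function of rooted forests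
of the complete complex `K_n^d` is
`Σ_{(F,R)} det(∂_{R̄,F})² x^{|R|} = x^{C(n−1,d−1)} (x+n)^{C(n−1,d)}` in `ℤ[x]`. -/
theorem sum_rootedForests_completeComplex
    (n d : ℕ) (hd : 1 ≤ d) (hdn : d ≤ n - 1)
    (e : ∀ F R : Finset (Finset (Fin n)),
      IsRootedForest n d (completeComplex n d) F R →
        ((faces (completeComplex n d) (d - 1) \ R : Finset (Finset (Fin n))) ≃ F)) :
    (∑ F ∈ (faces (completeComplex n d) d).powerset,
        ∑ R ∈ (faces (completeComplex n d) (d - 1)).powerset,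
        if h : IsRootedForest n d (completeComplex n d) F R then
          (Polynomial.C ((Matrix.det (subMat n d (completeComplex n d) F R (e F R h))) ^ 2)) *
            Polynomial.X ^ R.card
        else 0) =
      Polynomial.X ^ Nat.choose (n - 1) (d - 1) *
        (Polynomial.X + Polynomial.C (n : ℤ)) ^ Nat.choose (n - 1) d := by
  rw [sum_eq_det n d (completeComplex n d) e _ rfl]
  apply det_complete n d hd hdn
  · ext f; simp [faces, completeComplex, mem_powersetCard]; omega
  · ext f; simp [faces, completeComplex, mem_powersetCard]; try omega
  · rfl
end

section
/- Let V be a finite type with decidable equality and let G be a simple graph on V with decidable adjacency. Then, as an identity in ℤ[x], det(L_G + x·Id) = Σ over all rooted spanning forests (F,S) of G of x^{|S|}, where L_G is the graph Laplacian of G (the matrix D − A with D the diagonal matrix of vertex degrees and A the adjacency matrix, with integer entries). -/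
open Finset

namespace RSF

variable {V : Type*}

/-- `f` strictly decreases some rank function away from its fixed points. -/
def Ranked (f : V → V) : Prop := ∃ h : V → ℕ, ∀ v, f v ≠ v → h (f v) < h v

/-- The matrix with rows `e_v - e_{f v}` (or `e_v` if `f v = v`). -/
def row [DecidableEq V] (R : Type*) [CommRing R] (v u : V) : V → R :=
  fun w => (if w = v then 1 else 0) - (if u = v then 0 else if w = u then 1 else 0)

lemma det_ranked [Fintype V] [DecidableEq V] (R : Type*) [CommRing R] (f : V → V) (hf : Ranked f) :
    Matrix.det (Matrix.of fun v => row R v (f v)) = 1 := by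
  obtain ⟨h, hh⟩ := hf
  have hd : ∀ v w, v ≠ w → h v ≤ h w → row R v (f v) w = 0 := by
    intro v w hvw hle
    unfold row
    rw [if_neg (Ne.symm hvw)]
    by_cases h1 : f v = v
    · simp [h1]
    · rw [if_neg h1, if_neg]
      · simp
      · rintro rfl
        have := hh v h1
        omega
  have hbt : (Matrix.of fun v => row R v (f v)).BlockTriangular (fun v => OrderDual.toDual (h v)) := by
    intro i j hij
    have hij' : h i < h j := hij
    exact hd i j (by rintro rfl; exact lt_irrefl _ hij') hij'.le
  rw [hbt.det]
  apply Finset.prod_eq_one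
  intro a _
  suffices hone : (Matrix.of fun v => row R v (f v)).toSquareBlock
      (fun v => OrderDual.toDual (h v)) a = 1 by rw [hone, Matrix.det_one]
  ext ⟨i, hi⟩ ⟨j, hj⟩
  simp only [Matrix.toSquareBlock_def, Matrix.of_apply, Matrix.one_apply, Subtype.mk.injEq]
  split_ifs with hij
  · subst hij
    unfold row
    by_cases h1 : f i = i
    · simp [h1]
    · simp [h1, Ne.symm h1]
  · exact hd i j hij (le_of_eq (OrderDual.toDual.injective (hi.trans hj.symm)))

lemma exists_cycle [Fintype V] (f : V → V) (hf : ¬ Ranked f) :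
    ∃ v, v ∈ Function.periodicPts f ∧ f v ≠ v := by
  classical
  by_contra! hc
  apply hf
  refine ⟨fun v => (univ.filter fun u => ∃ n, f^[n] v = u).card, fun v hv => ?_⟩
  apply Finset.card_lt_card
  rw [Finset.ssubset_iff_of_subset]
  · refine ⟨v, by simpa using ⟨0, rfl⟩, ?_⟩
    simp only [mem_filter, mem_univ, true_and]
    rintro ⟨n, hn⟩
    exact hv (hc v (Function.mk_mem_periodicPts (n := n + 1) (Nat.succ_pos _) hn))
  · intro u
    simp only [mem_filter, mem_univ, true_and]
    rintro ⟨n, hn⟩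
    exact ⟨n + 1, hn⟩

lemma det_not_ranked [Fintype V] [DecidableEq V] (R : Type*) [CommRing R] [IsDomain R]
    (f : V → V) (hf : ¬ Ranked f) :
    Matrix.det (Matrix.of fun v => row R v (f v)) = 0 := by
  classical
  obtain ⟨v₀, hv₀, hv₀'⟩ := exists_cycle f hf
  set C : Finset V := univ.filter fun v => v ∈ Function.periodicPts f ∧ f v ≠ v with hC
  have hb := Function.bijOn_periodicPts f
  have hmem : ∀ v, v ∈ C ↔ v ∈ Function.periodicPts f ∧ f v ≠ v := by simp [hC]
  rw [← Matrix.exists_vecMul_eq_zero_iff]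
  refine ⟨fun v => if v ∈ C then 1 else 0, ?_, ?_⟩
  · intro h0
    have := congrFun h0 v₀
    simp [hmem, hv₀, hv₀'] at this
  · ext w
    simp only [Matrix.vecMul, dotProduct, Matrix.of_apply, Pi.zero_apply, ite_mul, one_mul, zero_mul]
    rw [← Finset.sum_filter]
    simp only [Finset.filter_mem_eq_inter, Finset.univ_inter]
    have : ∀ v ∈ C, row R v (f v) w = (if w = v then 1 else 0) - (if w = f v then 1 else 0) := by
      intro v hv
      simp [row, ((hmem v).1 hv).2]
    rw [Finset.sum_congr rfl this, Finset.sum_sub_distrib, sub_eq_zero]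
    symm
    apply Finset.sum_bij (fun v _ => f v)
    · intro v hv
      rw [hmem] at hv ⊢
      exact ⟨hb.mapsTo hv.1, fun h => hv.2 (hb.injOn (hb.mapsTo hv.1) hv.1 h)⟩
    · intro a ha b hb' h
      exact hb.injOn ((hmem a).1 ha).1 ((hmem b).1 hb').1 h
    · intro b hb'
      rw [hmem] at hb'
      obtain ⟨a, ha, rfl⟩ := hb.surjOn hb'.1
      refine ⟨a, (hmem a).2 ⟨ha, fun h => hb'.2 (by rw [h, h])⟩, rfl⟩
    · intro a ha
      rfl

open scoped Classical in
lemma det_expand [Fintype V] [DecidableEq V] (G : SimpleGraph V) [DecidableRel G.Adj] :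
    Matrix.det ((G.lapMatrix ℤ).map Polynomial.C +
        (Polynomial.X : Polynomial ℤ) • (1 : Matrix V V (Polynomial ℤ))) =
    ∑ f ∈ (univ : Finset (V → V)).filter (fun f => Ranked f ∧ ∀ v, f v ≠ v → G.Adj v (f v)),
      (Polynomial.X : Polynomial ℤ) ^ (univ.filter fun v => f v = v).card := by
  set w : V → V → Polynomial ℤ := fun v u => if u = v then Polynomial.X else
    if G.Adj v u then 1 else 0 with hw
  have h1 : ((G.lapMatrix ℤ).map Polynomial.C +
        (Polynomial.X : Polynomial ℤ) • (1 : Matrix V V (Polynomial ℤ))) =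
      fun v => ∑ u, w v u • row (Polynomial ℤ) v u := by
    ext1 v x
    have hs : ∀ u, (w v u • row (Polynomial ℤ) v u) x =
        (if u = v then (if x = v then Polynomial.X else 0) else 0) +
        ((if G.Adj v u then (if x = v then 1 else 0) else 0) -
          (if x = u then (if G.Adj v u then 1 else 0) else 0)) := by
      intro u
      by_cases h : u = v
      · subst h; simp [hw, row]
      · by_cases h' : G.Adj v u <;> by_cases h'' : x = v <;> simp [hw, row, h, h', h'']
    rw [Finset.sum_apply, Finset.sum_congr rfl (fun u _ => hs u), Finset.sum_add_distrib,
      Finset.sum_sub_distrib]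
    simp only [Finset.sum_ite_eq, Finset.sum_ite_eq', mem_univ, if_true]
    rw [← Finset.sum_filter, Finset.sum_const]
    simp only [SimpleGraph.lapMatrix, SimpleGraph.degMatrix, Matrix.add_apply, Matrix.map_apply,
      Matrix.sub_apply, Matrix.diagonal_apply, SimpleGraph.adjMatrix_apply, Matrix.smul_apply,
      Matrix.one_apply]
    have hdeg : (univ.filter fun u => G.Adj v u).card = G.degree v := by
      rw [← SimpleGraph.card_neighborFinset_eq_degree, SimpleGraph.neighborFinset_eq_filter]
    rw [hdeg]
    by_cases h : v = x
    · subst h; simp; ring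
    · by_cases h' : G.Adj v x <;> simp [h, Ne.symm h, h']
  rw [h1]
  have h2 := (Matrix.detRowAlternating (n := V) (R := Polynomial ℤ)).toMultilinearMap.map_sum
    (fun v u => w v u • row (Polynomial ℤ) v u)
  refine Eq.trans h2 ?_
  rw [Finset.sum_filter]
  apply Finset.sum_congr rfl
  intro f _
  rw [MultilinearMap.map_smul_univ]
  change _ • Matrix.det (Matrix.of fun v => row (Polynomial ℤ) v (f v)) = _
  by_cases hf : Ranked f
  · rw [det_ranked _ f hf]
    by_cases ha : ∀ v, f v ≠ v → G.Adj v (f v)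
    · rw [if_pos ⟨hf, ha⟩]
      have : ∀ v, w v (f v) = if f v = v then Polynomial.X else 1 := by
        intro v
        by_cases h : f v = v
        · simp [hw, h]
        · simp [hw, h, ha v h]
      simp only [this, Finset.prod_ite, Finset.prod_const, one_pow, mul_one,
        smul_eq_mul]
    · rw [if_neg (fun h => ha h.2)]
      push Not at ha
      obtain ⟨v, hv, hv'⟩ := ha
      rw [Finset.prod_eq_zero (mem_univ v), zero_smul]
      simp [hw, hv, hv']
  · rw [det_not_ranked _ f hf, if_neg (fun h => hf h.1), smul_zero]

/-- graph of `f`. -/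
def gr (f : V → V) : SimpleGraph V := SimpleGraph.fromRel fun a b => f a = b

lemma gr_adj (f : V → V) (a b : V) : (gr f).Adj a b ↔ a ≠ b ∧ (f a = b ∨ f b = a) := by
  simp [gr]

lemma reach_iter (f : V → V) (v : V) (n : ℕ) : (gr f).Reachable v (f^[n] v) := by
  induction n with
  | zero => exact SimpleGraph.Reachable.refl _
  | succ n ih =>
    rw [Function.iterate_succ_apply']
    by_cases h : f (f^[n] v) = f^[n] v
    · rw [h]; exact ih
    · exact ih.trans (SimpleGraph.Adj.reachable ((gr_adj _ _ _).2 ⟨Ne.symm h, Or.inl rfl⟩))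

lemma gr_acyclic (f : V → V) (hf : Ranked f) : (gr f).IsAcyclic := by
  classical
  obtain ⟨h, hh⟩ := hf
  intro u c hc
  obtain ⟨x, hx, hmax⟩ := Finset.exists_max_image c.support.toFinset h
    ⟨u, by simp⟩
  rw [List.mem_toFinset] at hx
  have hr := hc.rotate hx
  have hnn := hr.not_nil
  have key : ∀ y, (gr f).Adj x y → y ∈ (c.rotate x hx).support → y = f x := by
    intro y hy hys
    rw [gr_adj] at hy
    rcases hy.2 with h1 | h1
    · exact h1.symm
    · have h2 := hh y (by rw [h1]; exact hy.1)
      rw [h1] at h2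
      have h3 : y ∈ c.support := by simpa using hys
      have := hmax y (by simpa using h3)
      omega
  apply hr.snd_ne_penultimate
  rw [key _ (SimpleGraph.Walk.adj_snd hnn) (by simp),
    key _ (SimpleGraph.Walk.adj_penultimate hnn).symm (by simp)]

lemma iter_fixed (f : V → V) (h : V → ℕ) (hh : ∀ v, f v ≠ v → h (f v) < h v) (N : ℕ) :
    ∀ v, h v ≤ N → f (f^[N] v) = f^[N] v := by
  induction N with
  | zero =>
    intro v hv
    by_contra hc
    have := hh v hc
    omega
  | succ N ih =>
    intro v hv
    rw [Function.iterate_succ_apply]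
    by_cases hc : f v = v
    · rw [hc, Function.iterate_fixed hc, hc]
    · exact ih _ (by have := hh v hc; omega)

lemma exists_root [Fintype V] (f : V → V) (hf : Ranked f) :
    ∃ r : V → V, (∀ v, f (r v) = r v) ∧ (∀ v, f v = v → r v = v) ∧
      (∀ v, (gr f).Reachable v (r v)) ∧ ∀ u v, (gr f).Reachable u v → r u = r v := by
  obtain ⟨h, hh⟩ := hf
  set N := univ.sup h
  have hfix : ∀ v, f (f^[N] v) = f^[N] v := fun v =>
    iter_fixed f h hh N v (Finset.le_sup (f := h) (mem_univ v))
  have hstep : ∀ v, f^[N] (f v) = f^[N] v := fun v => by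
    rw [← Function.iterate_succ_apply, Function.iterate_succ_apply', hfix]
  refine ⟨fun v => f^[N] v, hfix, fun v hv => Function.iterate_fixed hv N,
    fun v => reach_iter f v N, ?_⟩
  rintro u v ⟨p⟩
  induction p with
  | nil => rfl
  | cons hadj _ ih =>
    rw [← ih]
    rw [gr_adj] at hadj
    rcases hadj.2 with h1 | h1
    · rw [← h1]; exact (hstep _).symm
    · rw [← h1]; exact hstep _

lemma ranked_ext (f g : V → V) (hf : Ranked f) (hfix : ∀ v, f v = v ↔ g v = v)
    (hgr : gr f = gr g) : f = g := by
  obtain ⟨h, hh⟩ := hf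
  have : ∀ n v, h v < n → f v = g v := by
    intro n
    induction n with
    | zero => intro v hv; omega
    | succ n ih =>
      intro v hv
      by_cases hc : f v = v
      · rw [hc, (hfix v).1 hc]
      · have hlt := hh v hc
        have hadj : (gr g).Adj v (f v) := by
          rw [← hgr, gr_adj]; exact ⟨Ne.symm hc, Or.inl rfl⟩
        rw [gr_adj] at hadj
        rcases hadj.2 with h1 | h1
        · exact h1.symm
        · exfalso
          rw [← ih (f v) (by omega)] at h1
          have h2 := hh (f v) (by rw [h1]; exact Ne.symm hc)
          rw [h1] at h2
          omega
  funext v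
  exact this _ v (Nat.lt_succ_self _)

lemma exists_fun [Fintype V] (H : SimpleGraph V) (hH : H.IsAcyclic) (S : Finset V)
    (hS : ∀ c : H.ConnectedComponent, ∃! v : V, v ∈ S ∧ H.connectedComponentMk v = c) :
    ∃ f : V → V, Ranked f ∧ (∀ v, f v = v ↔ v ∈ S) ∧ gr f = H := by
  classical
  choose ρ hρ hρu using fun v => hS (H.connectedComponentMk v)
  have hreach : ∀ v, H.Reachable v (ρ v) := fun v =>
    (SimpleGraph.ConnectedComponent.exact (hρ v).2).symm
  have hadjρ : ∀ u v, H.Adj u v → ρ u = ρ v := fun u v huv =>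
    hρu v (ρ u) ⟨(hρ u).1, (hρ u).2.trans (SimpleGraph.ConnectedComponent.sound huv.reachable)⟩
  have hSρ : ∀ v, v ∈ S → ρ v = v := fun v hv => (hρu v v ⟨hv, rfl⟩).symm
  have hex : ∀ v, ∃ u, (v ∈ S → u = v) ∧ (v ∉ S → H.Adj v u ∧ H.dist u (ρ u) < H.dist v (ρ v)) := by
    intro v
    by_cases hv : v ∈ S
    · exact ⟨v, fun _ => rfl, fun h => absurd hv h⟩
    · obtain ⟨p, hp⟩ := (hreach v).exists_walk_length_eq_dist
      generalize hr : ρ v = r at p hp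
      cases p with
      | nil => exact absurd (hr ▸ (hρ v).1) hv
      | @cons _ u _ hadj q =>
        refine ⟨u, fun h => absurd h hv, fun _ => ⟨hadj, ?_⟩⟩
        rw [← hadjρ v u hadj, hr, ← hp]
        have := SimpleGraph.dist_le q
        simp only [SimpleGraph.Walk.length_cons]
        omega
  choose f hf1 hf2 using hex
  have hfS : ∀ v, f v = v ↔ v ∈ S := by
    intro v
    refine ⟨fun h => ?_, hf1 v⟩
    by_contra hv
    have := (hf2 v hv).1
    rw [h] at this
    exact H.loopless.irrefl _ this
  have hR : Ranked f := ⟨fun v => H.dist v (ρ v), fun v hv => (hf2 v (fun h => hv (hf1 v h))).2⟩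
  have hle : gr f ≤ H := by
    intro a b hab
    rw [gr_adj] at hab
    rcases hab with ⟨hne, rfl | rfl⟩
    · exact (hf2 a (fun h => hne (hf1 a h).symm)).1
    · exact (hf2 b (fun h => hne (hf1 b h))).1.symm
  refine ⟨f, hR, hfS, le_antisymm hle ?_⟩
  intro a b hab
  by_contra hn
  obtain ⟨r, hr1, hr2, hr3, hr4⟩ := exists_root f hR
  have hrρ : ∀ v, r v = ρ v := fun v => hρu v (r v) ⟨(hfS _).1 (hr1 v),
    SimpleGraph.ConnectedComponent.sound ((hr3 v).mono hle).symm⟩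
  have hab' : (gr f).Reachable a b := by
    refine (hr3 a).trans ?_
    rw [hrρ, hadjρ a b hab, ← hrρ]
    exact (hr3 b).symm
  have hb := SimpleGraph.isAcyclic_iff_forall_adj_isBridge.1 hH hab
  rw [SimpleGraph.isBridge_iff] at hb
  apply hb
  refine hab'.mono ?_
  intro x y hxy
  rw [SimpleGraph.deleteEdges_adj]
  refine ⟨hle hxy, fun h => hn ?_⟩
  rw [Set.mem_singleton_iff] at h
  rw [← SimpleGraph.mem_edgeSet, ← h]
  exact hxy

end RSF

open scoped Classical in
/-- For a finite simple graph `G`, as an identity in `ℤ[x]`,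
`det(L_G + x·Id)` equals the sum of `x^{|S|}` over all rooted spanning forests `(F,S)`
of `G`, i.e. over pairs where `F` is a set of edges of `G` such that the spanning
subgraph with edge set `F` is acyclic, and `S` is a set of vertices containing exactly
one vertex from each connected component of that spanning subgraph. -/
theorem det_graph_lap_add_X_eq_sum_rooted_spanning_forests
    (V : Type*) [Fintype V] [DecidableEq V]
    (G : SimpleGraph V) [DecidableRel G.Adj] :
    Matrix.det ((G.lapMatrix ℤ).map Polynomial.C +
        (Polynomial.X : Polynomial ℤ) • (1 : Matrix V V (Polynomial ℤ))) =
      ∑ F ∈ G.edgeFinset.powerset, ∑ S ∈ (Finset.univ : Finset V).powerset,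
        if ((SimpleGraph.fromEdgeSet (F : Set (Sym2 V))).IsAcyclic ∧
            ∀ c : (SimpleGraph.fromEdgeSet (F : Set (Sym2 V))).ConnectedComponent,
              ∃! v : V, v ∈ S ∧
                (SimpleGraph.fromEdgeSet (F : Set (Sym2 V))).connectedComponentMk v = c)
        then (Polynomial.X : Polynomial ℤ) ^ S.card
        else 0 := by
  rw [RSF.det_expand, ← Finset.sum_product', ← Finset.sum_filter]
  have hfe : ∀ f : V → V, SimpleGraph.fromEdgeSet
      (((RSF.gr f).edgeFinset : Finset (Sym2 V)) : Set (Sym2 V)) = RSF.gr f := by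
    intro f
    rw [SimpleGraph.coe_edgeFinset, SimpleGraph.fromEdgeSet_edgeSet]
  refine Finset.sum_bij (fun f _ => ((RSF.gr f).edgeFinset, univ.filter fun v => f v = v))
    ?_ ?_ ?_ ?_
  · intro f hf
    rw [mem_filter] at hf
    obtain ⟨-, hR, hG⟩ := hf
    rw [mem_filter]
    refine ⟨?_, ?_⟩
    · simp only [mem_product, mem_powerset, subset_univ, and_true, SimpleGraph.edgeFinset_subset_edgeFinset]
      intro a b hab
      rw [RSF.gr_adj] at hab
      rcases hab with ⟨hne, rfl | rfl⟩
      · exact hG a hne.symm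
      · exact (hG b hne).symm
    · dsimp only
      rw [hfe]
      refine ⟨RSF.gr_acyclic f hR, ?_⟩
      obtain ⟨r, hr1, hr2, hr3, hr4⟩ := RSF.exists_root f hR
      intro c
      induction c using SimpleGraph.ConnectedComponent.ind with
      | h v =>
        refine ⟨r v, ⟨by simpa using hr1 v, SimpleGraph.ConnectedComponent.sound (hr3 v).symm⟩, ?_⟩
        rintro u ⟨hu, huv⟩
        simp only [mem_filter, mem_univ, true_and] at hu
        rw [← hr2 u hu]
        exact hr4 _ _ (SimpleGraph.ConnectedComponent.exact huv)
  · intro f hf g hg hfg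
    rw [mem_filter] at hf
    rw [Prod.mk.injEq] at hfg
    apply RSF.ranked_ext f g hf.2.1
    · intro v
      have := Finset.ext_iff.1 hfg.2 v
      simpa using this
    · rw [← hfe f, hfg.1, hfe g]
  · rintro ⟨F, S⟩ hFS
    rw [mem_filter, mem_product, mem_powerset] at hFS
    obtain ⟨⟨hF, -⟩, hac, hS⟩ := hFS
    dsimp only at hF hac hS
    obtain ⟨f, hR, hfS, hgr⟩ := RSF.exists_fun _ hac S hS
    refine ⟨f, ?_, ?_⟩
    · rw [mem_filter]
      refine ⟨mem_univ _, hR, fun v hv => ?_⟩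
      have h1 : (RSF.gr f).Adj v (f v) := (RSF.gr_adj _ _ _).2 ⟨Ne.symm hv, Or.inl rfl⟩
      rw [hgr, SimpleGraph.fromEdgeSet_adj] at h1
      have := hF (Finset.mem_coe.1 h1.1)
      simpa using this
    · rw [Prod.mk.injEq]
      constructor
      · ext e
        rw [SimpleGraph.mem_edgeFinset, hgr, SimpleGraph.edgeSet_fromEdgeSet]
        simp only [Set.mem_sdiff, Finset.mem_coe]
        refine ⟨fun h => h.1, fun h => ⟨h, ?_⟩⟩
        have := hF h
        rw [SimpleGraph.mem_edgeFinset] at this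
        exact G.not_isDiag_of_mem_edgeSet this
      · ext v
        simp [hfS]
  · intro f hf
    rfl
end

section
/- Let G be a 1-dimensional simplicial complex on vertex set Fin n (i.e. a graph, with G_1 its edges and G_0 its vertices) with incidence matrix ∂, and let (F,R) be a rooted forest of G. Then (F,R) has exactly one fitting orientation: there is a unique bijection φ : R̄ → F such that r ⊆ φ(r) for every r ∈ R̄. -/
open Finset

lemma aux_inc_sum {n : ℕ} (a b : Fin n) (hab : a ≠ b) :
    incEntry {a} ({a, b} : Finset (Fin n)) + incEntry {b} ({a, b} : Finset (Fin n)) = 0 := by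
  have h1 : ({a, b} : Finset (Fin n)) \ {a} = {b} := by
    ext x; simp only [mem_sdiff, mem_insert, mem_singleton]; grind
  have h2 : ({a, b} : Finset (Fin n)) \ {b} = {a} := by
    ext x; simp only [mem_sdiff, mem_insert, mem_singleton]; grind
  unfold incEntry
  rw [if_pos (by simp), if_pos (by simp), h1, h2, sum_singleton, sum_singleton]
  rcases lt_or_gt_of_ne hab with h | h
  · have h3 : ({a, b} : Finset (Fin n)).filter (fun w => w < b) = {a} := by
      ext x; simp only [mem_filter, mem_insert, mem_singleton]; grind
    have h4 : ({a, b} : Finset (Fin n)).filter (fun w => w < a) = ∅ := by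
      ext x; simp only [mem_filter, mem_insert, mem_singleton, notMem_empty]; grind
    simp [h3, h4]
  · have h3 : ({a, b} : Finset (Fin n)).filter (fun w => w < a) = {b} := by
      ext x; simp only [mem_filter, mem_insert, mem_singleton]; grind
    have h4 : ({a, b} : Finset (Fin n)).filter (fun w => w < b) = ∅ := by
      ext x; simp only [mem_filter, mem_insert, mem_singleton, notMem_empty]; grind
    simp [h3, h4]

lemma aux_pair {n : ℕ} (r s f : Finset (Fin n)) (hr : r.card = 1) (hs : s.card = 1)
    (hf : f.card = 2) (hrs : r ≠ s) (hrf : r ⊆ f) (hsf : s ⊆ f) :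
    incEntry r f + incEntry s f = 0 ∧ ∀ t : Finset (Fin n), t.card = 1 → t ⊆ f → t = r ∨ t = s := by
  obtain ⟨a, rfl⟩ := card_eq_one.1 hr
  obtain ⟨b, rfl⟩ := card_eq_one.1 hs
  have hab : a ≠ b := fun h => hrs (by rw [h])
  have hf' : f = {a, b} := by
    symm
    apply eq_of_subset_of_card_le
    · intro x hx
      simp only [mem_insert, mem_singleton] at hx
      rcases hx with rfl | rfl
      · exact hrf (by simp)
      · exact hsf (by simp)
    · rw [hf, card_pair hab]
  subst hf'
  refine ⟨aux_inc_sum a b hab, ?_⟩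
  intro t ht htf
  obtain ⟨c, rfl⟩ := card_eq_one.1 ht
  have : c ∈ ({a, b} : Finset (Fin n)) := htf (by simp)
  simp only [mem_insert, mem_singleton] at this
  rcases this with rfl | rfl <;> simp

lemma aux_exists {α β : Type*} [Fintype α] [Fintype β] [DecidableEq α] (A : α → β → ℚ)
    (hA : LinearIndependent ℚ A) (hc : Fintype.card α = Fintype.card β) :
    ∃ φ : α ≃ β, ∀ r, A r (φ r) ≠ 0 := by
  let e : α ≃ β := Fintype.equivOfCardEq hc
  let M : Matrix α α ℚ := fun i j => A i (e j)
  have hM : LinearIndependent ℚ M.row := by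
    have := hA.map' (LinearEquiv.funCongrLeft ℚ ℚ e).toLinearMap (LinearEquiv.ker _)
    exact this
  have hdet : M.det ≠ 0 := by
    rw [Matrix.linearIndependent_rows_iff_isUnit, Matrix.isUnit_iff_isUnit_det] at hM
    exact hM.ne_zero
  rw [← Matrix.det_transpose, Matrix.det_apply] at hdet
  obtain ⟨σ, -, hσ⟩ := exists_ne_zero_of_sum_ne_zero hdet
  refine ⟨σ.trans e, fun r hr => hσ ?_⟩
  have : ∏ i, M.transpose (σ i) i = 0 := prod_eq_zero (mem_univ r) hr
  rw [this, smul_zero]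

lemma aux_unique {n : ℕ} {V W F : Finset (Finset (Fin n))} (hWV : W ⊆ V)
    (hV : ∀ v ∈ V, v.card = 1) (hF : ∀ f ∈ F, f.card = 2)
    (hli : LinearIndependent ℚ fun f : F => fun r : V => (incEntry r.1 f.1 : ℚ))
    (φ ψ : W ≃ F) (hφ : ∀ r, r.1 ⊆ (φ r).1) (hψ : ∀ r, r.1 ⊆ (ψ r).1) : φ = ψ := by
  by_contra hne
  obtain ⟨r₀, hr₀⟩ : ∃ r, φ r ≠ ψ r := by
    by_contra h
    push Not at h
    exact hne (Equiv.ext h)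
  let S := {r : W // φ r ≠ ψ r}
  have key : ∀ j : S, ∃ k : S, k ≠ j ∧ incEntry j.1.1 (φ j.1).1 + incEntry k.1.1 (φ j.1).1 = 0 ∧
      ∀ t : Finset (Fin n), t.card = 1 → t ⊆ (φ j.1).1 → t = j.1.1 ∨ t = k.1.1 := by
    rintro ⟨j, hj⟩
    have hk1 : ψ (ψ.symm (φ j)) = φ j := by simp
    have hkj : ψ.symm (φ j) ≠ j := by
      intro h
      rw [h] at hk1
      exact hj hk1.symm
    refine ⟨⟨ψ.symm (φ j), ?_⟩, ?_, ?_⟩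
    · rw [hk1]
      exact fun h => hkj (φ.injective h)
    · exact fun h => hkj (congrArg Subtype.val h)
    · refine aux_pair _ _ _ (hV _ (hWV j.2)) (hV _ (hWV (ψ.symm (φ j)).2)) (hF _ (φ j).2)
        (fun h => hkj (Subtype.ext h.symm)) (hφ j) ?_
      have := hψ (ψ.symm (φ j))
      rwa [hk1] at this
  let M : Matrix S S ℚ := fun i j => (incEntry i.1.1 (φ j.1).1 : ℚ)
  have hv : Matrix.vecMul (fun _ => (1 : ℚ)) M = 0 := by
    funext j
    obtain ⟨k, hkj, hsum, hall⟩ := key j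
    have : ∑ i : S, (incEntry i.1.1 (φ j.1).1 : ℚ) = 0 := by
      rw [← sum_subset (subset_univ ({j, k} : Finset S)), sum_pair hkj.symm]
      · exact_mod_cast hsum
      · intro i _ hi
        have : ¬ i.1.1 ⊆ (φ j.1).1 := by
          intro h
          apply hi
          simp only [mem_insert, mem_singleton]
          rcases hall _ (hV _ (hWV i.1.2)) h with h | h
          · exact Or.inl (Subtype.ext (Subtype.ext h))
          · exact Or.inr (Subtype.ext (Subtype.ext h))
        simp [incEntry, this]
    simpa [Matrix.vecMul, dotProduct, M] using this
  have hdet : M.det = 0 := Matrix.exists_vecMul_eq_zero_iff.1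
    ⟨fun _ => 1, fun h => one_ne_zero (congrFun h ⟨r₀, hr₀⟩), hv⟩
  obtain ⟨x, hx0, hx⟩ := Matrix.exists_mulVec_eq_zero_iff.2 hdet
  have hli2 := hli.comp (fun j : S => φ j.1)
    (fun a b h => Subtype.ext (φ.injective h))
  rw [Fintype.linearIndependent_iff] at hli2
  refine hx0 (funext (hli2 x ?_))
  funext r
  simp only [Finset.sum_apply, Pi.smul_apply, Function.comp_apply, smul_eq_mul, Pi.zero_apply]
  by_cases hr : ∃ i : S, i.1.1 = r.1
  · obtain ⟨i, hi⟩ := hr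
    have := congrFun hx i
    simp only [Matrix.mulVec, dotProduct, M, Pi.zero_apply] at this
    rw [← this, ← hi]
    exact sum_congr rfl fun _ _ => mul_comm _ _
  · apply sum_eq_zero
    intro j _
    obtain ⟨k, -, -, hall⟩ := key j
    have : ¬ r.1 ⊆ (φ j.1).1 := by
      intro h
      rcases hall _ (hV _ r.2) h with h | h
      · exact hr ⟨j, h.symm⟩
      · exact hr ⟨k, h.symm⟩
    simp [incEntry, this]

/-- For a 1-dimensional simplicial complex `G` (a graph), every rooted
forest `(F,R)` has exactly one fitting orientation: there is a unique bijection
`φ : R̄ → F` with `r ⊆ φ(r)` for every `r ∈ R̄`. -/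
theorem unique_fittingOrientation_of_dim_one
    (n : ℕ) (hn : 1 ≤ n)
    (G : Finset (Finset (Fin n))) (hG : IsComplex n 1 G)
    (F R : Finset (Finset (Fin n))) (hFR : IsRootedForest n 1 G F R) :
    ∃! φ : (faces G (1 - 1) \ R : Finset (Finset (Fin n))) ≃ F,
      ∀ r, r.1 ⊆ (φ r).1 := by
  obtain ⟨⟨hF, hcol⟩, -, hrow, hspan⟩ := hFR
  have hc : Fintype.card (faces G (1 - 1) \ R : Finset (Finset (Fin n))) = Fintype.card F := by
    let M : Matrix (faces G (1 - 1)) F ℚ := fun r f => (incEntry r.1 f.1 : ℚ)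
    have h1 := finrank_span_eq_card hrow
    have h2 : M.rank = Module.finrank ℚ (Submodule.span ℚ (Set.range M.row)) :=
      M.rank_eq_finrank_span_row
    have h3 : M.transpose.rank = Fintype.card F := LinearIndependent.rank_matrix hcol
    rw [Matrix.rank_transpose] at h3
    rw [← h1, ← h3, h2, hspan]
    rfl
  obtain ⟨φ, hφ⟩ := aux_exists _ hrow hc
  have hφ' : ∀ r, r.1 ⊆ (φ r).1 := by
    intro r
    by_contra h
    exact hφ r (by simp [incEntry, h])
  refine ⟨φ, hφ', fun ψ hψ => ?_⟩
  exact aux_unique sdiff_subset (fun v hv => (mem_filter.1 hv).2)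
    (fun f hf => (mem_filter.1 (hF hf)).2) hcol ψ φ hψ hφ'
end
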